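/- arXiv:1911.02297 — 4 statements merged into one kernel-verified Lean document; each statement's English description precedes it below -/
import Mathlib

section
/- Let k ≥ 2, let V be a nonempty finite set, and let μ : (Fin k → V) → ℝ be a weighted k-uniform hypergraph on V with marginals m_i. Let λ_0, …, λ_{k-2} be real numbers with λ_i ≤ 0 for each i, such that for every 0 ≤ i ≤ k-2, every i-face σ : Fin i → V, and every f : V → ℝ: Σ_{u,v∈V} m_{i+2}(σ ⌢ (u,v))·f(u)·f(v) ≥ λ_i · Σ_{v∈V} (Σ_{u∈V} m_{i+2}(σ ⌢ (v,u)))·f(v)². For n ≥ 1, define the n-th tensor power μ_n : (Fin k → (Fin n → V)) → ℝ by μ_n(τ) = Π_{j∈Fin n} μ(fun i ↦ τ(i)(j)). Then every set I ⊆ (Fin n → V) that is independent with respect to μ_n (i.e. μ_n(τ) = 0 whenever the range of τ is contained in I) satisfies Σ_{x∈I} Π_{j∈Fin n} m_1(x(j)) ≤ 1 - 1/((1-λ_0)(1-λ_1)⋯(1-λ_{k-2})). -/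
/-- The `i`-th marginal of a weight function `μ` on `k`-tuples: `marg μ i h σ` is the sum of
`μ` over all extensions of the `i`-tuple `σ` to a `k`-tuple (`σ` occupying the first `i`
coordinates). -/
noncomputable def marg {V : Type*} [Fintype V] {k : ℕ} (μ : (Fin k → V) → ℝ)
    (i : ℕ) (hik : i ≤ k) (σ : Fin i → V) : ℝ :=
  ∑ τ : Fin (k - i) → V,
    μ (fun j => if h : (j : ℕ) < i then σ ⟨j, h⟩ else τ ⟨(j : ℕ) - i, by omega⟩)

/-- The `n`-th tensor power of a weighted `k`-uniform hypergraph `μ` on `V`: the weight of a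
`k`-tuple of vertices of `V^n` is the product over the coordinates `j ∈ Fin n` of the weight
of the `j`-th column. -/
noncomputable def tensorPow {V : Type*} [Fintype V] {k : ℕ} (μ : (Fin k → V) → ℝ)
    (n : ℕ) (τ : Fin k → (Fin n → V)) : ℝ :=
  ∏ j : Fin n, μ (fun i => τ i j)

/-- A symmetric positive semidefinite kernel. -/
def QPos {X : Type*} [Fintype X] (K : X → X → ℝ) : Prop :=
  (∀ u v, K u v = K v u) ∧ ∀ f : X → ℝ, 0 ≤ ∑ u, ∑ v, K u v * f u * f v

theorem QPos_iff {X : Type*} [Fintype X] (K : X → X → ℝ) :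
    QPos K ↔ (Matrix.of K).PosSemidef := by
  have key : ∀ f : X → ℝ, star f ⬝ᵥ ((Matrix.of K).mulVec f)
      = ∑ u, ∑ v, K u v * f u * f v := by
    intro f
    simp only [dotProduct, Matrix.mulVec, Finset.mul_sum, Matrix.of_apply, Pi.star_apply,
      star_trivial]
    refine Finset.sum_congr rfl fun u _ => Finset.sum_congr rfl fun v _ => by ring
  rw [Matrix.posSemidef_iff_dotProduct_mulVec]
  constructor
  · rintro ⟨h1, h2⟩
    refine ⟨?_, fun x => ?_⟩
    · ext u v
      simp [Matrix.conjTranspose_apply, h1 u v]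
    · rw [key]; exact h2 x
  · rintro ⟨h1, h2⟩
    refine ⟨fun u v => ?_, fun f => ?_⟩
    · have := congrFun (congrFun h1 v) u
      simpa [Matrix.conjTranspose_apply] using this
    · rw [← key]; exact h2 f

theorem QPos.mul {X : Type*} [Fintype X] {K L : X → X → ℝ} (hK : QPos K) (hL : QPos L) :
    QPos (fun u v => K u v * L u v) := by
  rw [QPos_iff] at *
  exact hK.hadamard hL

theorem QPos.pull {X Y : Type*} [Fintype X] [Fintype Y] {K : X → X → ℝ} (hK : QPos K)
    (e : Y → X) : QPos (fun u v => K (e u) (e v)) := by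
  rw [QPos_iff] at *
  exact hK.submatrix e

theorem QPos.comb {X : Type*} [Fintype X] {K L : X → X → ℝ} (hK : QPos K) (hL : QPos L)
    {a b : ℝ} (ha : 0 ≤ a) (hb : 0 ≤ b) :
    QPos (fun u v => a * K u v + b * L u v) := by
  refine ⟨fun u v => by simp only [hK.1 u v, hL.1 u v], fun f => ?_⟩
  have h : ∑ u, ∑ v, (a * K u v + b * L u v) * f u * f v
      = a * ∑ u, ∑ v, K u v * f u * f v + b * ∑ u, ∑ v, L u v * f u * f v := by
    simp only [Finset.mul_sum, ← Finset.sum_add_distrib]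
    refine Finset.sum_congr rfl fun u _ => Finset.sum_congr rfl fun v _ => by ring
  rw [h]
  have := mul_nonneg ha (hK.2 f)
  have := mul_nonneg hb (hL.2 f)
  linarith

theorem QPos.congr' {X : Type*} [Fintype X] {K L : X → X → ℝ} (hK : QPos K)
    (h : ∀ u v, K u v = L u v) : QPos L := by
  have : K = L := by funext u v; exact h u v
  exact this ▸ hK

theorem QPos.ones {X : Type*} [Fintype X] : QPos (fun _ _ : X => (1 : ℝ)) := by
  refine ⟨fun _ _ => rfl, fun f => ?_⟩
  have : ∑ u, ∑ v, (1 : ℝ) * f u * f v = (∑ u, f u) ^ 2 := by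
    rw [sq, Finset.sum_mul_sum]
    simp
  rw [this]; positivity

/-- The lower spectral bound is inherited by tensor products. -/
theorem QPos.tensor {V : Type*} [Fintype V] {n : ℕ} (M D : Fin n → V → V → ℝ) (l : ℝ)
    (hl : l ≤ 0)
    (h1 : ∀ j, QPos (fun u v => M j u v - l * D j u v))
    (h2 : ∀ j, QPos (fun u v => D j u v - M j u v))
    (h3 : ∀ j, QPos (fun u v => D j u v + M j u v)) (S : Finset (Fin n)) :
    QPos (fun x y : Fin n → V => (∏ j ∈ S, M j (x j) (y j)) - l * ∏ j ∈ S, D j (x j) (y j)) ∧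
    QPos (fun x y : Fin n → V => (∏ j ∈ S, D j (x j) (y j)) - ∏ j ∈ S, M j (x j) (y j)) ∧
    QPos (fun x y : Fin n → V => (∏ j ∈ S, D j (x j) (y j)) + ∏ j ∈ S, M j (x j) (y j)) := by
  classical
  induction S using Finset.induction_on with
  | empty =>
    refine ⟨?_, ?_, ?_⟩
    · refine (QPos.ones.comb QPos.ones (a := 1) (b := -l) (by norm_num) (by linarith)).congr' ?_
      intro u v; simp; ring
    · refine (QPos.ones.comb QPos.ones (a := 0) (b := 0) (by norm_num) (by norm_num)).congr' ?_
      intro u v; simp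
    · refine (QPos.ones.comb QPos.ones (a := 1) (b := 1) (by norm_num) (by norm_num)).congr' ?_
      intro u v; simp
  | insert a S ha ih =>
    obtain ⟨i1, i2, i3⟩ := ih
    have e : ∀ (F : Fin n → V → V → ℝ) (x y : Fin n → V),
        ∏ j ∈ insert a S, F j (x j) (y j) = F a (x a) (y a) * ∏ j ∈ S, F j (x j) (y j) :=
      fun F x y => Finset.prod_insert ha
    have p1 := (h1 a).pull (fun x : Fin n → V => x a)
    have p2 := (h2 a).pull (fun x : Fin n → V => x a)
    have p3 := (h3 a).pull (fun x : Fin n → V => x a)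
    refine ⟨?_, ?_, ?_⟩
    · have hpos : 0 < 1 - l := by linarith
      refine ((p1.mul i1).comb (p2.mul i2) (a := 1 / (1 - l)) (b := -l / (1 - l))
        (by positivity) (div_nonneg (by linarith) hpos.le)).congr' ?_
      intro x y
      rw [e M, e D]
      field_simp
      ring
    · refine ((p2.mul i3).comb (p3.mul i2) (a := 1 / 2) (b := 1 / 2)
        (by norm_num) (by norm_num)).congr' ?_
      intro x y
      rw [e M, e D]
      ring
    · refine ((p3.mul i3).comb (p2.mul i2) (a := 1 / 2) (b := 1 / 2)
        (by norm_num) (by norm_num)).congr' ?_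
      intro x y
      rw [e M, e D]
      ring

open Classical in
/-- Quadratic form of a diagonal kernel. -/
theorem diag_form {X : Type*} [Fintype X] (d f : X → ℝ) :
    ∑ u, ∑ v, (if u = v then d u else 0) * f u * f v = ∑ u, d u * f u ^ 2 := by
  refine Finset.sum_congr rfl fun u _ => ?_
  rw [Finset.sum_eq_single u]
  · simp; ring
  · intro v _ hv; simp [Ne.symm hv]
  · simp

open Classical in
theorem QPos_deg {X : Type*} [Fintype X] (M : X → X → ℝ) (d : X → ℝ)
    (hM : ∀ u v, 0 ≤ M u v) (hs : ∀ u v, M u v = M v u) (hd : ∀ u, ∑ v, M u v = d u)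
    (s : ℝ) (hs2 : s ^ 2 = 1) :
    QPos (fun u v => (if u = v then d u else 0) + s * M u v) := by
  refine ⟨fun u v => ?_, fun f => ?_⟩
  · beta_reduce
    rw [hs u v]
    by_cases h : u = v
    · subst h; rfl
    · simp [h, Ne.symm h]
  · have a1 : ∑ u, ∑ v, M u v * f u ^ 2 = ∑ u, d u * f u ^ 2 := by
      refine Finset.sum_congr rfl fun u _ => ?_
      rw [← Finset.sum_mul, hd]
    have a2 : ∑ u, ∑ v, M u v * f v ^ 2 = ∑ u, d u * f u ^ 2 := by
      rw [Finset.sum_comm, ← a1]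
      refine Finset.sum_congr rfl fun u _ => Finset.sum_congr rfl fun v _ => ?_
      rw [hs u v]
    have a3 : 0 ≤ ∑ u, ∑ v, M u v * (f u + s * f v) ^ 2 :=
      Finset.sum_nonneg fun u _ => Finset.sum_nonneg fun v _ =>
        mul_nonneg (hM u v) (sq_nonneg _)
    have a4 : ∑ u, ∑ v, M u v * (f u + s * f v) ^ 2
        = ∑ u, ∑ v, M u v * f u ^ 2 + ∑ u, ∑ v, M u v * f v ^ 2
          + 2 * ∑ u, ∑ v, s * M u v * f u * f v := by
      simp only [Finset.mul_sum, ← Finset.sum_add_distrib]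
      refine Finset.sum_congr rfl fun u _ => Finset.sum_congr rfl fun v _ => ?_
      linear_combination (M u v * f v ^ 2) * hs2
    have a5 : ∑ u, ∑ v, ((if u = v then d u else 0) + s * M u v) * f u * f v
        = ∑ u, d u * f u ^ 2 + ∑ u, ∑ v, s * M u v * f u * f v := by
      rw [← diag_form]
      simp only [add_mul, ← Finset.sum_add_distrib]
    rw [a5]
    linarith

/-- The Hoffman step on a weighted graph. -/
theorem hoffman_step {X : Type*} [Fintype X] (M : X → X → ℝ) (d : X → ℝ) (W l ε : ℝ)
    (I : Finset X) (hs : ∀ u v, M u v = M v u) (hd : ∀ u, ∑ v, M u v = d u)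
    (hdn : ∀ u, 0 ≤ d u)
    (hW : ∑ u, d u = W) (hWpos : 0 < W) (hl : l ≤ 0) (hε : 0 ≤ ε)
    (hform : ∀ f : X → ℝ, l * ∑ u, d u * f u ^ 2 ≤ ∑ u, ∑ v, M u v * f u * f v)
    (hI : ∀ x ∈ I, ∑ y ∈ I, M x y ≤ ε * d x) :
    ∑ x ∈ I, d x ≤ (1 - (1 - ε) / (1 - l)) * W := by
  classical
  set a := ∑ x ∈ I, d x with ha
  have ha0 : 0 ≤ a := Finset.sum_nonneg fun u _ => hdn u
  set e := ∑ x ∈ I, ∑ y ∈ I, M x y with he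
  have hee : e ≤ ε * a := by
    rw [he, ha, Finset.mul_sum]
    exact Finset.sum_le_sum hI
  let g : X → ℝ := fun x => if x ∈ I then 1 else 0
  have s1 : ∑ u, d u * g u = a := by simp [g, ha]
  have s2 : ∑ u, ∑ v, M u v * g u * g v = e := by
    simp [g, he]
  have s3 : ∑ u, ∑ v, M u v * g u = a := by
    rw [← s1]
    refine Finset.sum_congr rfl fun u _ => ?_
    rw [← Finset.sum_mul, hd]
  have s4 : ∑ u, ∑ v, M u v * g v = a := by
    rw [Finset.sum_comm, ← s3]
    refine Finset.sum_congr rfl fun u _ => Finset.sum_congr rfl fun v _ => ?_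
    rw [hs u v]
  have s5 : ∑ u, ∑ v, M u v = W := by
    rw [← hW]; exact Finset.sum_congr rfl fun u _ => hd u
  have hgg : ∀ u, g u ^ 2 = g u := by
    intro u; by_cases h : u ∈ I <;> simp [g, h]
  have h := hform (fun x => W * g x - a)
  have t1 : ∑ u, d u * (W * g u - a) ^ 2 = W ^ 2 * a - a ^ 2 * W := by
    have : ∑ u, d u * (W * g u - a) ^ 2
        = (W ^ 2 - 2 * W * a) * ∑ u, d u * g u + a ^ 2 * ∑ u, d u := by
      simp only [Finset.mul_sum, ← Finset.sum_add_distrib]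
      refine Finset.sum_congr rfl fun u _ => ?_
      linear_combination (d u * W ^ 2) * hgg u
    rw [this, s1, hW]; ring
  have t2 : ∑ u, ∑ v, M u v * (W * g u - a) * (W * g v - a) = W ^ 2 * e - a ^ 2 * W := by
    have : ∑ u, ∑ v, M u v * (W * g u - a) * (W * g v - a)
        = W ^ 2 * ∑ u, ∑ v, M u v * g u * g v + (- (W * a)) * ∑ u, ∑ v, M u v * g u
          + (- (W * a)) * ∑ u, ∑ v, M u v * g v + a ^ 2 * ∑ u, ∑ v, M u v := by
      simp only [Finset.mul_sum, ← Finset.sum_add_distrib]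
      refine Finset.sum_congr rfl fun u _ => Finset.sum_congr rfl fun v _ => ?_
      ring
    rw [this, s2, s3, s4, s5]; ring
  simp only [t1, t2] at h
  have hpos : 0 < 1 - l := by linarith
  have hrw : (1 - (1 - ε) / (1 - l)) * W = (ε - l) * W / (1 - l) := by
    field_simp; ring
  rw [hrw, le_div_iff₀ hpos]
  rcases ha0.eq_or_lt with h0 | h0
  · rw [← h0]
    have : 0 ≤ (ε - l) * W := mul_nonneg (by linarith) hWpos.le
    linarith
  · have h' : W * a * (a * (1 - l)) ≤ W * a * ((ε - l) * W) := by
      have : W ^ 2 * e ≤ W ^ 2 * (ε * a) := mul_le_mul_of_nonneg_left hee (by positivity)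
      nlinarith
    exact le_of_mul_le_mul_left h' (by positivity)

open Classical in
/-- Marginals as a sum over all tuples extending the given one. -/
theorem marg_eq {V : Type*} [Fintype V] {k : ℕ} (μ : (Fin k → V) → ℝ)
    (i : ℕ) (hik : i ≤ k) (σ : Fin i → V) :
    marg μ i hik σ
      = ∑ τ : Fin k → V, if (∀ j : Fin i, τ (Fin.castLE hik j) = σ j) then μ τ else 0 := by
  rw [← Finset.sum_filter]
  unfold marg
  refine Finset.sum_bij' (fun τ _ => fun j : Fin k =>
      if h : (j : ℕ) < i then σ ⟨j, h⟩ else τ ⟨(j : ℕ) - i, by omega⟩)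
    (fun τ _ => fun j : Fin (k - i) => τ ⟨j + i, by omega⟩) ?_ ?_ ?_ ?_ ?_
  · intro τ _
    simp
  · intro τ _
    simp
  · intro τ _
    funext j
    simp
  · intro τ hτ
    simp only [Finset.mem_filter, Finset.mem_univ, true_and] at hτ
    funext j
    by_cases h : (j : ℕ) < i
    · simp only [h, dif_pos]
      exact (hτ ⟨j, h⟩).symm
    · simp only [h, dif_neg, not_false_eq_true]
      congr 1
      ext
      simp
      omega
  · intro τ _
    rfl

theorem marg_nonneg {V : Type*} [Fintype V] {k : ℕ} (μ : (Fin k → V) → ℝ)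
    (hnonneg : ∀ τ : Fin k → V, 0 ≤ μ τ)
    (i : ℕ) (hik : i ≤ k) (σ : Fin i → V) : 0 ≤ marg μ i hik σ :=
  Finset.sum_nonneg fun _ _ => hnonneg _

theorem forall_snoc {V : Type*} {k i : ℕ} (hik : i + 1 ≤ k) (σ : Fin i → V) (u : V)
    (τ : Fin k → V) :
    (∀ j : Fin (i + 1), τ (Fin.castLE hik j) = (Fin.snoc σ u : Fin (i + 1) → V) j) ↔
      (∀ j : Fin i, τ (Fin.castLE (by omega) j) = σ j) ∧ τ ⟨i, hik⟩ = u := by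
  rw [Fin.forall_fin_succ']
  simp only [Fin.snoc_castSucc, Fin.snoc_last]
  exact Iff.rfl

theorem marg_sum {V : Type*} [Fintype V] {k : ℕ} (μ : (Fin k → V) → ℝ)
    (i : ℕ) (hik : i + 1 ≤ k) (σ : Fin i → V) :
    ∑ u : V, marg μ (i + 1) hik (Fin.snoc σ u) = marg μ i (by omega) σ := by
  classical
  simp only [marg_eq, forall_snoc]
  rw [Finset.sum_comm]
  refine Finset.sum_congr rfl fun τ _ => ?_
  by_cases h : ∀ j : Fin i, τ (Fin.castLE (by omega) j) = σ j
  · simp [h]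
  · simp [h]

theorem marg_symm {V : Type*} [Fintype V] {k : ℕ} (μ : (Fin k → V) → ℝ)
    (hsymm : ∀ (π : Equiv.Perm (Fin k)) (τ : Fin k → V), μ (τ ∘ π) = μ τ)
    (i : ℕ) (hik : i + 2 ≤ k) (σ : Fin i → V) (u v : V) :
    marg μ (i + 2) hik (Fin.snoc (Fin.snoc σ u) v) =
      marg μ (i + 2) hik (Fin.snoc (Fin.snoc σ v) u) := by
  classical
  simp only [marg_eq, forall_snoc]
  let π : Equiv.Perm (Fin k) := Equiv.swap ⟨i, by omega⟩ ⟨i + 1, by omega⟩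
  refine Fintype.sum_equiv (Equiv.arrowCongr π (Equiv.refl V)) _ _ fun τ => ?_
  have e : (Equiv.arrowCongr π (Equiv.refl V)) τ = τ ∘ π := by
    funext j
    simp [Equiv.arrowCongr, π]
  rw [e, hsymm]
  have h1 : (τ ∘ π) ⟨i, by omega⟩ = τ ⟨i + 1, by omega⟩ := by simp [π]
  have h2 : (τ ∘ π) ⟨i + 1, by omega⟩ = τ ⟨i, by omega⟩ := by simp [π]
  have h3 : ∀ j : Fin i, (τ ∘ π) (Fin.castLE (by omega) j) = τ (Fin.castLE (by omega) j) := by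
    intro j
    simp only [Function.comp, π]
    rw [Equiv.swap_apply_of_ne_of_ne]
    · intro h; have := congrArg Fin.val h; simp at this; omega
    · intro h; have := congrArg Fin.val h; simp at this; omega
  refine if_congr ?_ rfl rfl
  rw [h1, h2]
  simp only [h3]
  tauto

theorem marg_full {V : Type*} [Fintype V] {k : ℕ} (μ : (Fin k → V) → ℝ) (h : k ≤ k)
    (σ : Fin k → V) : marg μ k h σ = μ σ := by
  classical
  rw [marg_eq, Finset.sum_eq_single σ]
  · simp
  · intro τ _ hτ
    rw [if_neg]
    intro h'
    exact hτ (funext h')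
  · simp

theorem marg_zero {V : Type*} [Fintype V] {k : ℕ} (μ : (Fin k → V) → ℝ) (h : 0 ≤ k)
    (σ : Fin 0 → V) : marg μ 0 h σ = ∑ τ, μ τ := by
  classical
  rw [marg_eq]
  simp

/-- Marginals of the tensor power. -/
noncomputable def tmarg {V : Type*} [Fintype V] {k : ℕ} (μ : (Fin k → V) → ℝ) (n : ℕ)
    (i : ℕ) (hik : i ≤ k) (σ : Fin i → (Fin n → V)) : ℝ :=
  ∏ j : Fin n, marg μ i hik (fun l => σ l j)

theorem col_snoc {V : Type*} {n i : ℕ} (σ : Fin i → (Fin n → V)) (x : Fin n → V) (j : Fin n) :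
    (fun l => (Fin.snoc σ x : Fin (i + 1) → (Fin n → V)) l j)
      = (Fin.snoc (fun l => σ l j) (x j) : Fin (i + 1) → V) := by
  funext l
  refine Fin.lastCases ?_ (fun l => ?_) l
  · simp
  · simp

theorem tmarg_snoc {V : Type*} [Fintype V] {k : ℕ} (μ : (Fin k → V) → ℝ) (n : ℕ)
    (i : ℕ) (hik : i + 1 ≤ k) (σ : Fin i → (Fin n → V)) (x : Fin n → V) :
    tmarg μ n (i + 1) hik (Fin.snoc σ x)
      = ∏ j : Fin n, marg μ (i + 1) hik (Fin.snoc (fun l => σ l j) (x j)) := by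
  unfold tmarg
  refine Finset.prod_congr rfl fun j _ => ?_
  rw [col_snoc]

theorem tmarg_snoc2 {V : Type*} [Fintype V] {k : ℕ} (μ : (Fin k → V) → ℝ) (n : ℕ)
    (i : ℕ) (hik : i + 2 ≤ k) (σ : Fin i → (Fin n → V)) (x y : Fin n → V) :
    tmarg μ n (i + 2) hik (Fin.snoc (Fin.snoc σ x) y)
      = ∏ j : Fin n,
        marg μ (i + 2) hik (Fin.snoc (Fin.snoc (fun l => σ l j) (x j)) (y j)) := by
  unfold tmarg
  refine Finset.prod_congr rfl fun j _ => ?_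
  rw [col_snoc, col_snoc]

theorem tmarg_nonneg {V : Type*} [Fintype V] {k : ℕ} (μ : (Fin k → V) → ℝ)
    (hnonneg : ∀ τ : Fin k → V, 0 ≤ μ τ) (n : ℕ)
    (i : ℕ) (hik : i ≤ k) (σ : Fin i → (Fin n → V)) : 0 ≤ tmarg μ n i hik σ :=
  Finset.prod_nonneg fun _ _ => marg_nonneg μ hnonneg _ _ _

theorem tmarg_sum {V : Type*} [Fintype V] {k : ℕ} (μ : (Fin k → V) → ℝ) (n : ℕ)
    (i : ℕ) (hik : i + 1 ≤ k) (σ : Fin i → (Fin n → V)) :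
    ∑ x : Fin n → V, tmarg μ n (i + 1) hik (Fin.snoc σ x) = tmarg μ n i (by omega) σ := by
  classical
  simp only [tmarg_snoc]
  rw [← Fintype.piFinset_univ,
    ← Finset.prod_univ_sum (fun _ : Fin n => (Finset.univ : Finset V))
      (fun j v => marg μ (i + 1) hik (Fin.snoc (fun l => σ l j) v))]
  unfold tmarg
  exact Finset.prod_congr rfl fun j _ => marg_sum μ i hik _

theorem prod_diag {V : Type*} {n : ℕ} [DecidableEq V] [DecidableEq (Fin n → V)]
    (d : Fin n → V → ℝ) (x y : Fin n → V) :
    (∏ j : Fin n, if x j = y j then d j (x j) else 0)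
      = if x = y then ∏ j : Fin n, d j (x j) else 0 := by
  by_cases h : x = y
  · subst h; simp
  · rw [if_neg h]
    obtain ⟨j, hj⟩ := Function.ne_iff.mp h
    exact Finset.prod_eq_zero (Finset.mem_univ j) (by simp [hj])

theorem one_le_prodlam (k : ℕ) (lam : ℕ → ℝ) (hlam : ∀ i : ℕ, i ≤ k - 2 → lam i ≤ 0) (a : ℕ) :
    1 ≤ ∏ i ∈ Finset.Ico a (k - 1), (1 - lam i) := by
  have h := Finset.prod_le_prod (s := Finset.Ico a (k - 1)) (f := fun _ => (1 : ℝ))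
    (g := fun i => 1 - lam i) (fun _ _ => by norm_num) (fun i hi => by
      have := hlam i (by have := Finset.mem_Ico.mp hi; omega)
      show 1 ≤ 1 - lam i
      linarith)
  simpa using h

theorem hoffman_main
    {V : Type*} [Fintype V] (k : ℕ)
    (μ : (Fin k → V) → ℝ)
    (hnonneg : ∀ τ : Fin k → V, 0 ≤ μ τ)
    (hsymm : ∀ (π : Equiv.Perm (Fin k)) (τ : Fin k → V), μ (τ ∘ π) = μ τ)
    (lam : ℕ → ℝ)
    (hlam : ∀ i : ℕ, i ≤ k - 2 → lam i ≤ 0)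
    (hspec : ∀ (i : ℕ) (hi : i + 2 ≤ k) (hi0 : i ≤ k) (σ : Fin i → V),
      0 < marg μ i hi0 σ →
      ∀ f : V → ℝ,
        ∑ u : V, ∑ v : V,
            marg μ (i + 2) hi (Fin.snoc (Fin.snoc σ u) v) * f u * f v ≥
          lam i * ∑ v : V,
            (∑ u : V, marg μ (i + 2) hi (Fin.snoc (Fin.snoc σ v) u)) * f v ^ 2)
    (n : ℕ)
    (I : Finset (Fin n → V))
    (hind : ∀ τ : Fin k → (Fin n → V), (∀ i : Fin k, τ i ∈ I) → tensorPow μ n τ = 0)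
    (m i : ℕ) (hm : i + 1 + m = k) (σ : Fin i → (Fin n → V)) (hσ : ∀ l, σ l ∈ I) :
    ∑ x ∈ I, tmarg μ n (i + 1) (by omega) (Fin.snoc σ x) ≤
      (1 - 1 / ∏ l ∈ Finset.Ico i (k - 1), (1 - lam l)) * tmarg μ n i (by omega) σ := by
  classical
  induction m generalizing i with
  | zero =>
    have hki : k = i + 1 := by omega
    subst hki
    have : ∑ x ∈ I, tmarg μ n (i + 1) (by omega) (Fin.snoc σ x) = 0 := by
      refine Finset.sum_eq_zero fun x hx => ?_
      unfold tmarg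
      simp only [marg_full]
      refine hind (Fin.snoc σ x) fun l => ?_
      refine Fin.lastCases ?_ (fun l => ?_) l
      · simpa using hx
      · simpa using hσ l
    rw [this]
    simp
  | succ m ih =>
    have hi : i ≤ k - 2 := by omega
    have hl := hlam i hi
    have hWn := tmarg_nonneg μ hnonneg n i (by omega) σ
    rcases hWn.eq_or_lt with h0 | hWpos
    · have hz := tmarg_sum μ n i (by omega) σ
      have hle : ∑ x ∈ I, tmarg μ n (i + 1) (by omega) (Fin.snoc σ x) ≤
          ∑ x, tmarg μ n (i + 1) (by omega) (Fin.snoc σ x) :=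
        Finset.sum_le_sum_of_subset_of_nonneg (Finset.subset_univ _)
          fun x _ _ => tmarg_nonneg μ hnonneg n _ _ _
      rw [← h0] at hz ⊢
      linarith
    have hcol : ∀ j : Fin n, 0 < marg μ i (by omega) (fun l => σ l j) := by
      intro j
      refine lt_of_le_of_ne (marg_nonneg μ hnonneg _ _ _) fun h => hWpos.ne' ?_
      exact Finset.prod_eq_zero (Finset.mem_univ j) h.symm
    set P := ∏ l ∈ Finset.Ico (i + 1) (k - 1), (1 - lam l) with hP
    have hP1 : 1 ≤ P := one_le_prodlam k lam hlam (i + 1)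
    have hPi : ∏ l ∈ Finset.Ico i (k - 1), (1 - lam l) = (1 - lam i) * P := by
      rw [hP, Finset.prod_eq_prod_Ico_succ_bot (by omega)]
    have hconst : 1 - 1 / ((1 - lam i) * P) = 1 - (1 - (1 - 1 / P)) / (1 - lam i) := by
      have : 1 - lam i ≠ 0 := by linarith
      field_simp
      ring
    rw [hPi, hconst]
    -- per-column data
    let M : Fin n → V → V → ℝ := fun j u v =>
      marg μ (i + 2) (by omega) (Fin.snoc (Fin.snoc (fun l => σ l j) u) v)
    let d : Fin n → V → ℝ := fun j u => marg μ (i + 1) (by omega) (Fin.snoc (fun l => σ l j) u)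
    have Mn : ∀ j u v, 0 ≤ M j u v := fun j u v => marg_nonneg μ hnonneg _ _ _
    have Ms : ∀ j u v, M j u v = M j v u := fun j u v => marg_symm μ hsymm i (by omega) _ u v
    have Md : ∀ j u, ∑ v, M j u v = d j u := fun j u => marg_sum μ (i + 1) (by omega) _
    have q2 : ∀ j, QPos (fun u v => (if u = v then d j u else 0) - M j u v) := fun j =>
      (QPos_deg (M j) (d j) (Mn j) (Ms j) (Md j) (-1) (by norm_num)).congr' fun u v => by ring
    have q3 : ∀ j, QPos (fun u v => (if u = v then d j u else 0) + M j u v) := fun j =>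
      (QPos_deg (M j) (d j) (Mn j) (Ms j) (Md j) 1 (by norm_num)).congr' fun u v => by ring
    have q1 : ∀ j, QPos (fun u v => M j u v - lam i * (if u = v then d j u else 0)) := by
      intro j
      refine ⟨fun u v => ?_, fun f => ?_⟩
      · beta_reduce
        rw [Ms j u v]
        by_cases h : u = v
        · subst h; rfl
        · simp [h, Ne.symm h]
      · have h := hspec i (by omega) (by omega) (fun l => σ l j) (hcol j) f
        have h2 : lam i * ∑ v, (∑ u, M j v u) * f v ^ 2 ≤ ∑ u, ∑ v, M j u v * f u * f v := h
        simp only [Md] at h2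
        have h3 : ∑ u, ∑ v, (M j u v - lam i * (if u = v then d j u else 0)) * f u * f v
            = ∑ u, ∑ v, M j u v * f u * f v - lam i * ∑ v, d j v * f v ^ 2 := by
          rw [← diag_form]
          simp only [Finset.mul_sum, ← Finset.sum_sub_distrib]
          refine Finset.sum_congr rfl fun u _ => Finset.sum_congr rfl fun v _ => by ring
        rw [h3]; linarith
    have T := (QPos.tensor M (fun j u v => if u = v then d j u else 0) (lam i) hl q1 q2 q3
      Finset.univ).1
    simp only [prod_diag] at T
    refine hoffman_step
      (fun x y => tmarg μ n (i + 2) (by omega) (Fin.snoc (Fin.snoc σ x) y))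
      (fun x => tmarg μ n (i + 1) (by omega) (Fin.snoc σ x))
      (tmarg μ n i (by omega) σ) (lam i) (1 - 1 / P) I ?_ ?_ ?_ ?_ hWpos hl ?_ ?_ ?_
    · intro x y
      simp only [tmarg_snoc2]
      exact Finset.prod_congr rfl fun j _ => Ms j _ _
    · intro x
      exact tmarg_sum μ n (i + 1) (by omega) _
    · intro x
      exact tmarg_nonneg μ hnonneg n _ _ _
    · exact tmarg_sum μ n i (by omega) σ
    · have : 1 / P ≤ 1 := by
        rw [div_le_one (by linarith)]; exact hP1
      linarith
    · intro f
      have h := T.2 f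
      have h3 : ∑ x, ∑ y, ((∏ j, M j (x j) (y j))
            - lam i * (if x = y then ∏ j, d j (x j) else 0)) * f x * f y
          = ∑ x, ∑ y, (∏ j, M j (x j) (y j)) * f x * f y
            - lam i * ∑ x, (∏ j, d j (x j)) * f x ^ 2 := by
        rw [← diag_form (fun x : Fin n → V => ∏ j, d j (x j))]
        simp only [Finset.mul_sum, ← Finset.sum_sub_distrib]
        refine Finset.sum_congr rfl fun u _ => Finset.sum_congr rfl fun v _ => ?_
        split_ifs <;> ring
      rw [h3] at h
      simp only [tmarg_snoc2]
      simp only [tmarg_snoc]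
      exact sub_nonneg.mp h
    · intro x hx
      refine ih (i + 1) (by omega) (Fin.snoc σ x) fun l => ?_
      refine Fin.lastCases ?_ (fun l => ?_) l
      · simpa using hx
      · simpa using hσ l

/-- **High dimensional Hoffman bound for tensor powers.** Let `μ` be a weighted `k`-uniform
hypergraph on a finite vertex set `V` (nonnegative, total sum 1, symmetric under permutations
of the `k` coordinates), whose link quadratic forms are bounded below by `λ_i ≤ 0`
(`0 ≤ i ≤ k-2`). Then for every `n ≥ 1`, every independent set `I` in the `n`-th tensor power
`μ_n` satisfies `∑_{x ∈ I} ∏_j m₁(x j) ≤ 1 - 1/((1-λ_0)⋯(1-λ_{k-2}))`. -/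
theorem high_dimensional_hoffman_bound_tensor_power
    {V : Type*} [Fintype V] [Nonempty V] (k : ℕ) (hk : 2 ≤ k)
    (μ : (Fin k → V) → ℝ)
    (hnonneg : ∀ τ : Fin k → V, 0 ≤ μ τ)
    (hsum : ∑ τ : Fin k → V, μ τ = 1)
    (hsymm : ∀ (π : Equiv.Perm (Fin k)) (τ : Fin k → V), μ (τ ∘ π) = μ τ)
    (lam : ℕ → ℝ)
    (hlam : ∀ i : ℕ, i ≤ k - 2 → lam i ≤ 0)
    (hspec : ∀ (i : ℕ) (hi : i ≤ k - 2) (σ : Fin i → V),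
      0 < marg μ i (by omega) σ →
      ∀ f : V → ℝ,
        ∑ u : V, ∑ v : V,
            marg μ (i + 2) (by omega) (Fin.snoc (Fin.snoc σ u) v) * f u * f v ≥
          lam i * ∑ v : V,
            (∑ u : V, marg μ (i + 2) (by omega) (Fin.snoc (Fin.snoc σ v) u)) * f v ^ 2)
    (n : ℕ) (hn : 1 ≤ n)
    (I : Finset (Fin n → V))
    (hind : ∀ τ : Fin k → (Fin n → V), (∀ i : Fin k, τ i ∈ I) → tensorPow μ n τ = 0) :
    ∑ x ∈ I, ∏ j : Fin n, marg μ 1 (by omega) (fun _ => x j) ≤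
      1 - 1 / ∏ i ∈ Finset.range (k - 1), (1 - lam i) := by
  have h := hoffman_main k μ hnonneg hsymm lam hlam
    (fun i hi _ σ hp f => hspec i (by omega) σ hp f) n I hind (k - 1) 0 (by omega)
    Fin.elim0 (fun l => l.elim0)
  have h0 : tmarg μ n 0 (by omega) Fin.elim0 = 1 := by
    unfold tmarg
    simp only [marg_zero, hsum, Finset.prod_const_one]
  rw [h0, mul_one, ← Finset.range_eq_Ico] at h
  refine le_trans (le_of_eq ?_) h
  refine Finset.sum_congr rfl fun x _ => ?_
  unfold tmarg
  refine Finset.prod_congr rfl fun j _ => ?_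
  congr 1
end

section
/- Let k ≥ 1 and let n be an integer with 3k ≤ n ≤ 4k - 1. If F is a family of 2k-element subsets of {1,…,n} that contains no three pairwise distinct members A, B, C with empty triple symmetric difference A Δ B Δ C = ∅, then |F| ≤ C(n-1, 2k-1), the binomial coefficient (n-1 choose 2k-1). -/
open Polynomial in
/-- Krawtchouk-type coefficient. -/
noncomputable def Kraw (a b k : ℕ) : ℤ := ((1 - X) ^ a * (1 + X) ^ b : ℤ[X]).coeff k

section KrawLemmas
open Polynomial

lemma Kraw_zero_left (b k : ℕ) : Kraw 0 b k = (b.choose k : ℤ) := by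
  simp [Kraw, Polynomial.coeff_one_add_X_pow]

lemma Kraw_succ_right (a b k : ℕ) : Kraw a (b+1) (k+1) = Kraw a b (k+1) + Kraw a b k := by
  unfold Kraw
  have : ((1 - X) ^ a * (1 + X) ^ (b+1) : ℤ[X])
      = (1 - X) ^ a * (1 + X) ^ b + ((1 - X) ^ a * (1 + X) ^ b) * X := by ring
  rw [this, coeff_add, coeff_mul_X]

lemma Kraw_two (a b k : ℕ) : 2 * Kraw a b k = Kraw (a+1) b k + Kraw a (b+1) k := by
  unfold Kraw
  rw [← coeff_add]
  have : ((1 - X) ^ (a+1) * (1 + X) ^ b + (1 - X) ^ a * (1 + X) ^ (b+1) : ℤ[X])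
      = C 2 * ((1 - X) ^ a * (1 + X) ^ b) := by
    rw [show (C 2 : ℤ[X]) = 2 from rfl]; ring
  rw [this, coeff_C_mul]

lemma Kraw_symm (a b k : ℕ) : Kraw b a k = (-1) ^ k * Kraw a b k := by
  unfold Kraw
  have h : ((1 - X) ^ b * (1 + X) ^ a : ℤ[X]) = ((1 - X) ^ a * (1 + X) ^ b : ℤ[X]).comp (-X) := by
    simp [mul_comm, sub_eq_add_neg]
  rw [h, show (-X : ℤ[X]) = C (-1) * X by simp, comp_C_mul_X_coeff, mul_comm]

lemma Kraw_abs_symm (a b k : ℕ) : |Kraw b a k| = |Kraw a b k| := by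
  rw [Kraw_symm a b k, abs_mul]; simp

lemma coeff_X_mul_derivative (p : ℤ[X]) (k : ℕ) :
    (X * derivative p).coeff k = k * p.coeff k := by
  cases k with
  | zero => simp
  | succ k => rw [coeff_X_mul, coeff_derivative]; push_cast; ring

lemma Kraw_rec (a b k : ℕ) :
    ((b:ℤ)+1) * Kraw (a+2) b k = ((a:ℤ)+b+2-2*k) * Kraw (a+1) (b+1) k - ((a:ℤ)+1) * Kraw a (b+2) k := by
  have h : (C ((b:ℤ)+1) * ((1 - X) ^ (a+2) * (1 + X) ^ b) : ℤ[X]) =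
      C ((a:ℤ)+b+2) * ((1 - X) ^ (a+1) * (1 + X) ^ (b+1))
      - C 2 * (X * derivative ((1 - X) ^ (a+1) * (1 + X) ^ (b+1)))
      - C ((a:ℤ)+1) * ((1 - X) ^ a * (1 + X) ^ (b+2)) := by
    simp [derivative_mul, derivative_pow]
    ring
  have h2 := congrArg (fun p => p.coeff k) h
  simp only [coeff_sub, coeff_C_mul, coeff_X_mul_derivative] at h2
  unfold Kraw
  linear_combination h2

lemma Kraw_rec0 (b k : ℕ) :
    ((b:ℤ)+1) * Kraw 1 b k = ((b:ℤ)+1-2*k) * Kraw 0 (b+1) k := by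
  have h : (C ((b:ℤ)+1) * ((1 - X) ^ 1 * (1 + X) ^ b) : ℤ[X]) =
      C ((b:ℤ)+1) * ((1 - X) ^ 0 * (1 + X) ^ (b+1))
      - C 2 * (X * derivative ((1 - X) ^ 0 * (1 + X) ^ (b+1))) := by
    simp [derivative_pow]
    ring
  have h2 := congrArg (fun p => p.coeff k) h
  simp only [coeff_sub, coeff_C_mul, coeff_X_mul_derivative] at h2
  unfold Kraw
  linear_combination h2

lemma Kraw_odd (k : ℕ) : ∀ a b : ℕ, a + b = 2 * k → Odd a → Kraw a b k = 0 := by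
  intro a
  induction a using Nat.strong_induction_on with
  | _ a ih =>
    intro b hab ho
    match a, ho with
    | 0, ho => simp at ho
    | 1, _ =>
      have h := Kraw_rec0 b k
      have h0 : ((b:ℤ)+1-2*k) = 0 := by have : (1:ℤ) + b = 2 * k := by exact_mod_cast hab
                                        linarith
      rw [h0, zero_mul] at h
      rcases mul_eq_zero.mp h with h | h
      · omega
      · exact h
    | a+2, ho =>
      have h := Kraw_rec a b k
      have h0 : ((a:ℤ)+b+2-2*k) = 0 := by omega
      have h1 := ih a (by omega) (b+2) (by omega) (by
        rcases ho with ⟨m, hm⟩; exact ⟨m-1, by omega⟩)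
      rw [h0, h1] at h
      simp only [zero_mul, mul_zero, sub_zero] at h
      rcases mul_eq_zero.mp h with h | h
      · omega
      · exact h

lemma Kraw_two_left (k b : ℕ) (hb : b + 2 = 2 * k) :
    ((b:ℤ)+1) * Kraw 2 b k = - ((2*k).choose k : ℤ) := by
  have h := Kraw_rec 0 b k
  have h0 : (((0:ℕ):ℤ)+b+2-2*k) = 0 := by push_cast; omega
  rw [h0, Kraw_zero_left, hb] at h
  simpa using h

lemma Kraw_central_aux (k c : ℕ) (hc : c + 2 = 2 * k) : ∀ a b : ℕ, a + b = 2 * k → 1 ≤ a → a ≤ b →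
    |Kraw a b k| ≤ - Kraw 2 c k := by
  have hneg : - Kraw 2 c k = |Kraw 2 c k| := by
    have := Kraw_two_left k c hc
    rw [abs_of_nonpos]
    by_contra hh
    push Not at hh
    have h1 : 0 < ((c:ℤ)+1) * Kraw 2 c k := by positivity
    have h2 : (0:ℤ) ≤ ((2*k).choose k : ℤ) := by positivity
    linarith
  intro a
  induction a using Nat.strong_induction_on with
  | _ a ih =>
    intro b hab h1 hle
    match a, h1 with
    | 1, _ => rw [Kraw_odd k 1 b hab (by decide), hneg]; simp
    | 2, _ =>
      have : b = c := by omega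
      rw [this, hneg]
    | a+3, _ =>
      have h := Kraw_rec (a+1) b k
      have h0 : (((a+1:ℕ):ℤ)+b+2-2*k) = 0 := by push_cast; omega
      have h1 := ih (a+1) (by omega) (b+2) (by omega) (by omega) (by omega)
      rw [h0] at h
      have h2 : ((b:ℤ)+1) * |Kraw (a+3) b k| = (((a+1:ℕ):ℤ)+1) * |Kraw (a+1) (b+2) k| := by
        rw [← abs_of_nonneg (show (0:ℤ) ≤ (b:ℤ)+1 by positivity), ← abs_mul, h,
          ← abs_of_nonneg (show (0:ℤ) ≤ ((a+1:ℕ):ℤ)+1 by positivity), ← abs_mul]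
        simp [abs_mul]
      have h3 : (((a+1:ℕ):ℤ)+1) ≤ (b:ℤ)+1 := by push_cast; omega
      have h4 : ((b:ℤ)+1) * |Kraw (a+3) b k| ≤ ((b:ℤ)+1) * (- Kraw 2 c k) := by
        rw [h2]
        exact mul_le_mul h3 h1 (abs_nonneg _) (by positivity)
      exact le_of_mul_le_mul_left h4 (by positivity)

lemma Kraw_central (k c : ℕ) (hc : c + 2 = 2 * k) (a b : ℕ) (hab : a + b = 2 * k) (ha : 1 ≤ a)
    (hb : 1 ≤ b) : |Kraw a b k| ≤ - Kraw 2 c k := by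
  rcases le_total a b with h | h
  · exact Kraw_central_aux k c hc a b hab ha h
  · rw [Kraw_abs_symm b a]; exact Kraw_central_aux k c hc b a (by omega) hb h

lemma Kraw_one_nonpos (b k : ℕ) (h : b + 1 ≤ 2 * k) : Kraw 1 b k ≤ 0 := by
  have h1 := Kraw_rec0 b k
  rw [Kraw_zero_left] at h1
  by_contra hh
  push Not at hh
  have h2 : 0 < ((b:ℤ)+1) * Kraw 1 b k := by positivity
  have h3 : ((b:ℤ)+1-2*k) * ((b+1).choose k : ℤ) ≤ 0 :=
    mul_nonpos_of_nonpos_of_nonneg (by omega) (by positivity)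
  linarith

lemma Kraw_main : ∀ b a k : ℕ, a + b + 2 ≤ 2 * k - 1 →
    |Kraw (a+1) (b+1) k| ≤ - Kraw 1 (a+b+1) k := by
  intro b
  induction b with
  | zero =>
    intro a k h
    rw [Kraw_abs_symm 1 (a+1)]
    rw [abs_of_nonpos (Kraw_one_nonpos _ _ (by omega))]
  | succ b ih =>
    intro a k h
    rcases Nat.lt_or_ge (a+(b+1)+2) (2*k-1) with hlt | hge
    · obtain ⟨k, rfl⟩ : ∃ k', k = k' + 1 := ⟨k-1, by omega⟩
      rw [Kraw_succ_right (a+1) (b+1), show a + (b+1) + 1 = (a+b+1)+1 by ring,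
        Kraw_succ_right 1 (a+b+1)]
      have h1 := ih a (k+1) (by omega)
      have h2 := ih a k (by omega)
      have h3 := abs_add_le (Kraw (a+1) (b+1) (k+1)) (Kraw (a+1) (b+1) k)
      linarith
    · have he : a + (b+1) + 3 = 2 * k := by omega
      have h1 := Kraw_two (a+1) (b+1+1) k
      have h2 := Kraw_two 1 (a+(b+1)+1) k
      rw [Kraw_odd k 1 (a+(b+1)+1+1) (by omega) (by decide)] at h2
      have hc := Kraw_central k (a+(b+1)+1) (by omega)
      have h5 : |2 * Kraw (a+1) (b+1+1) k| ≤ - Kraw 2 (a+(b+1)+1) k := by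
        rw [h1]
        rcases Nat.even_or_odd (a+1) with ho | ho
        · rw [Kraw_odd k (a+1+1) (b+1+1) (by omega) ho.add_one, zero_add]
          exact hc _ _ (by omega) (by omega) (by omega)
        · rw [Kraw_odd k (a+1) (b+1+1+1) (by omega) ho, add_zero]
          exact hc _ _ (by omega) (by omega) (by omega)
      rw [abs_mul, abs_two] at h5
      norm_num at h2 h5 ⊢
      linarith

end KrawLemmas

section SumLemmas
open Finset

/-- The sign `(-1)^{[x ∈ P]}`. -/
def sgn {α : Type*} [DecidableEq α] (P : Finset α) (x : α) : ℤ := if x ∈ P then -1 else 1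

lemma sum_sgn {α : Type*} [DecidableEq α] (U T : Finset α) (hT : T ⊆ U) (k : ℕ) :
    ∑ P ∈ powersetCard k U, ∏ x ∈ T, sgn P x = Kraw T.card (U.card - T.card) k := by
  unfold Kraw
  have h1 : ((1 - Polynomial.X) ^ T.card * (1 + Polynomial.X) ^ (U.card - T.card) : Polynomial ℤ)
      = ∏ u ∈ U, (1 + (Polynomial.C (if u ∈ T then (-1:ℤ) else 1)) * Polynomial.X) := by
    rw [← prod_sdiff hT, mul_comm]
    congr 1
    · rw [prod_congr rfl (g := fun _ => (1 + Polynomial.X : Polynomial ℤ))]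
      · rw [prod_const, card_sdiff_of_subset hT]
      · intro x hx
        rw [if_neg (mem_sdiff.mp hx).2]; simp
    · rw [prod_congr rfl (g := fun _ => (1 - Polynomial.X : Polynomial ℤ))]
      · rw [prod_const]
      · intro x hx
        rw [if_pos hx]; simp [sub_eq_add_neg]
  rw [h1, prod_one_add, Polynomial.finsetSum_coeff, powersetCard_eq_filter, sum_filter]
  apply sum_congr rfl
  intro P hP
  rw [prod_mul_distrib, prod_const, ← map_prod, Polynomial.coeff_C_mul, Polynomial.coeff_X_pow]
  have h2 : ∏ x ∈ T, sgn P x = ∏ x ∈ P, (if x ∈ T then (-1:ℤ) else 1) := by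
    unfold sgn
    rw [prod_ite, prod_ite]
    simp only [prod_const_one, mul_one, prod_const]
    congr 2
    ext x; simp [and_comm]
  rw [h2]
  by_cases h : P.card = k
  · simp [h]
  · simp [h, Ne.symm h]

lemma Kraw_abs_le (a b k : ℕ) : |Kraw a b k| ≤ ((a+b).choose k : ℤ) := by
  have h := sum_sgn (Finset.range (a+b)) (Finset.range a) (by simp) k
  simp only [card_range, Nat.add_sub_cancel_left] at h
  rw [← h]
  refine (abs_sum_le_sum_abs _ _).trans ?_
  have : ∀ P ∈ powersetCard k (Finset.range (a+b)), |∏ x ∈ Finset.range a, sgn P x| ≤ 1 := by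
    intro P _
    rw [abs_prod]
    apply le_of_eq
    apply prod_eq_one
    intro x _
    unfold sgn; split_ifs <;> simp
  refine (sum_le_sum this).trans ?_
  simp

lemma card_even_subsets {α : Type*} [DecidableEq α] (X : Finset α) (hX : X.Nonempty) :
    2 * ∑ T ∈ X.powerset, (if Even (X.card - T.card) then (1:ℤ) else 0) = 2 ^ X.card := by
  have h1 : ∑ T ∈ X.powerset, (-1:ℤ) ^ (X.card - T.card) = 0 := by
    have : ∑ T ∈ X.powerset, (-1:ℤ) ^ (X.card - T.card) =
        (-1) ^ X.card * ∑ T ∈ X.powerset, (-1:ℤ) ^ T.card := by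
      rw [mul_sum]
      apply sum_congr rfl
      intro T hT
      have hle := card_le_card (mem_powerset.mp hT)
      obtain ⟨m, hm⟩ := Nat.exists_eq_add_of_le hle
      rw [hm, Nat.add_sub_cancel_left, pow_add]
      have : ((-1:ℤ) ^ T.card) * (-1) ^ T.card = 1 := by
        rw [← pow_add]; exact Even.neg_one_pow ⟨_, rfl⟩
      linear_combination (-(-1:ℤ)^m) * this
    rw [this, sum_powerset_neg_one_pow_card_of_nonempty hX, mul_zero]
  have h2 : ∑ T ∈ X.powerset, (1:ℤ) = 2 ^ X.card := by simp
  have h3 : 2 * ∑ T ∈ X.powerset, (if Even (X.card - T.card) then (1:ℤ) else 0) =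
      ∑ T ∈ X.powerset, (1:ℤ) + ∑ T ∈ X.powerset, (-1:ℤ) ^ (X.card - T.card) := by
    rw [mul_sum, ← sum_add_distrib]
    apply sum_congr rfl
    intro T _
    split_ifs with h
    · rw [h.neg_one_pow]; norm_num
    · rw [(Nat.not_even_iff_odd.mp h).neg_one_pow]; norm_num
  rw [h3, h1, h2, add_zero]

lemma choose_le_kappa (k r : ℕ) (hr : r + 2 ≤ 2 * k) :
    ((r+1).choose k : ℤ) ≤ (2*k-1) * (-Kraw 1 r k) := by
  have h1 := Kraw_rec0 r k
  rw [Kraw_zero_left] at h1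
  have h3 := Kraw_one_nonpos r k (by omega)
  have h5 : (0:ℤ) ≤ ((r+1).choose k : ℤ) := by positivity
  have h6 : ((r+1).choose k : ℤ) ≤ (2*k - (r+1)) * ((r+1).choose k : ℤ) :=
    le_mul_of_one_le_left h5 (by omega)
  have h7 : ((r:ℤ)+1) * (-Kraw 1 r k) ≤ (2*k-1) * (-Kraw 1 r k) :=
    mul_le_mul_of_nonneg_right (by omega) (by linarith)
  linarith

/-- termwise bound -/
lemma term_bound (k r j t : ℕ) (hr2 : r + 1 ≤ 2 * k) (hj : 1 ≤ j) (hjr : j < r)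
    (ht : t ≤ j) :
    |Kraw t (r - t) k| * |Kraw (j - t) (2 * k - (j - t)) k| ≤
      if Even (j - t) then ((2*k).choose k : ℤ) * (- Kraw 1 (r-1) k) else 0 := by
  split_ifs with he
  · rcases Nat.eq_zero_or_pos t with rfl | htp
    · simp only [Nat.sub_zero] at *
      rw [Kraw_zero_left]
      obtain ⟨r, rfl⟩ : ∃ r', r = r' + 1 := ⟨r-1, by omega⟩
      have hj2 : 2 ≤ j := by rcases he with ⟨m, hm⟩; omega
      have hc := Kraw_central k (2*k-2) (by omega) j (2*k-j) (by omega) (by omega) (by omega)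
      have h2 := Kraw_two_left k (2*k-2) (by omega)
      have hcast : ((2*k-2 : ℕ):ℤ) = 2*k-2 := by omega
      rw [hcast] at h2
      simp only [Nat.add_sub_cancel]
      rw [abs_of_nonneg (by positivity : (0:ℤ) ≤ ((r+1).choose k : ℤ))]
      have h3 := Kraw_one_nonpos r k (by omega)
      have h4 := choose_le_kappa k r (by omega)
      have h8 : (0:ℤ) ≤ - Kraw 2 (2*k-2) k := (abs_nonneg _).trans hc
      calc ((r+1).choose k : ℤ) * |Kraw j (2*k-j) k|
          ≤ ((2*k-1) * (-Kraw 1 r k)) * (- Kraw 2 (2*k-2) k) := by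
            apply mul_le_mul h4 hc (abs_nonneg _)
            apply mul_nonneg (by omega) (by linarith)
        _ = _ := by linear_combination (Kraw 1 r k) * h2
    · have h1 := Kraw_main (r - t - 1) (t-1) k (by omega)
      rw [show t - 1 + 1 = t by omega, show r - t - 1 + 1 = r - t by omega,
        show t - 1 + (r - t - 1) + 1 = r - 1 by omega] at h1
      have h2 := Kraw_abs_le (j-t) (2*k-(j-t)) k
      rw [show j - t + (2*k-(j-t)) = 2*k by omega] at h2
      rw [mul_comm]
      exact mul_le_mul h2 h1 (abs_nonneg _) (by positivity)
  · rw [Kraw_odd k (j-t) _ (by omega) (Nat.not_even_iff_odd.mp he)]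
    simp

end SumLemmas

section Lam
open Finset

/-- The basic eigenfunction attached to the pairs `{x, σ x}`, `x ∈ X`. -/
def phi {α : Type*} [DecidableEq α] (X : Finset α) (σ : α → α) (B : Finset α) : ℤ :=
  ∏ x ∈ X, ((if x ∈ B then 1 else 0) - (if σ x ∈ B then 1 else 0))

lemma abs_phi_le {α : Type*} [DecidableEq α] (X : Finset α) (σ : α → α) (B : Finset α) :
    |phi X σ B| ≤ 1 := by
  unfold phi
  rw [abs_prod]
  apply prod_le_one
  · intro i _; exact abs_nonneg _
  · intro i _; split_ifs <;> simp

lemma two_central (k : ℕ) (hk : 1 ≤ k) : 2 * (2 * (k:ℤ) - 1) ≤ ((2*k).choose k : ℤ) := by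
  have h1 := Kraw_two_left k (2*k-2) (by omega)
  have h2 := Kraw_two 1 (2*k-2) k
  rw [Kraw_odd k 1 (2*k-2+1) (by omega) (by decide)] at h2
  have hcast : ((2*k-2 : ℕ):ℤ) = 2*k-2 := by omega
  rw [hcast] at h1
  have h3 : (0:ℤ) < ((2*k).choose k : ℤ) := by
    exact_mod_cast Nat.choose_pos (by omega)
  norm_num at h2
  have h4 : 0 < (2*(k:ℤ)-1) := by omega
  have h5 : 0 < - Kraw 1 (2*k-2) k := by
    by_contra hh
    push Not at hh
    have : (2*(k:ℤ)-1) * (- Kraw 1 (2*k-2) k) ≤ 0 :=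
      mul_nonpos_of_nonneg_of_nonpos h4.le hh
    rw [← h2] at h1
    linarith
  have h6 : (2*(k:ℤ)-1) * 1 ≤ (2*(k:ℤ)-1) * (- Kraw 1 (2*k-2) k) :=
    mul_le_mul_of_nonneg_left (by omega) h4.le
  rw [← h2] at h1
  linarith

lemma Lam_bound_full {α : Type*} [DecidableEq α] (A R X : Finset α) (σ : α → α) (k : ℕ)
    (hk : 1 ≤ k) (hA : A.card = 2 * k) (hr2 : R.card + 1 ≤ 2 * k)
    (hr1 : k ≤ R.card)
    (hXA : X ⊆ A) (hσ : ∀ x ∈ X, σ x ∈ R)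
    (hinj : Set.InjOn σ X) (hj : X.card = R.card) :
    2 * |∑ P ∈ powersetCard k A, ∑ Q ∈ powersetCard k R, phi X σ (P ∪ Q)| ≤
      ((2*k).choose k : ℤ) * (- Kraw 1 (R.card - 1) k) := by
  have himg : X.image σ = R := by
    apply eq_of_subset_of_card_le
    · intro y hy
      obtain ⟨x, hx, rfl⟩ := mem_image.mp hy
      exact hσ x hx
    · rw [card_image_of_injOn hinj, hj]
  have hR : ((R.card).choose k : ℤ) ≤ (2*k-1) * (-Kraw 1 (R.card-1) k) := by
    have := choose_le_kappa k (R.card - 1) (by omega)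
    rwa [show R.card - 1 + 1 = R.card by omega] at this
  have hmain : |∑ P ∈ powersetCard k A, ∑ Q ∈ powersetCard k R, phi X σ (P ∪ Q)| ≤
      ((R.card).choose k : ℤ) := by
    rw [sum_comm]
    refine (abs_sum_le_sum_abs _ _).trans ?_
    rw [← card_powersetCard, card_eq_sum_ones]
    push_cast
    apply sum_le_sum
    intro Q hQ
    rw [mem_powersetCard] at hQ
    refine (abs_sum_le_sum_abs _ _).trans ?_
    have hb : ∀ P ∈ powersetCard k A, |phi X σ (P ∪ Q)| ≤
        if P = A \ X.filter (fun x => σ x ∈ Q) then 1 else 0 := by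
      intro P hP
      rw [mem_powersetCard] at hP
      split_ifs with h
      · exact abs_phi_le _ _ _
      · by_contra hne
        apply h
        have hne : phi X σ (P ∪ Q) ≠ 0 := by
          intro h0; apply hne; rw [h0]; simp
        unfold phi at hne
        rw [prod_ne_zero_iff] at hne
        apply eq_of_subset_of_card_le
        · intro x hx
          rw [mem_sdiff, mem_filter]
          refine ⟨hP.1 hx, ?_⟩
          rintro ⟨hxX, hxQ⟩
          apply hne x hxX
          simp [hx, hxQ]
        · rw [card_sdiff_of_subset ((filter_subset _ _).trans hXA), hA, hP.2]
          have : (X.filter (fun x => σ x ∈ Q)).card = k := by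
            rw [← hQ.2, ← card_image_of_injOn (s := X.filter (fun x => σ x ∈ Q)) (f := σ)]
            · congr 1
              ext y
              simp only [mem_image, mem_filter]
              constructor
              · rintro ⟨x, ⟨_, h⟩, rfl⟩; exact h
              · intro hy
                have := hQ.1 hy
                rw [← himg, mem_image] at this
                obtain ⟨x, hx, rfl⟩ := this
                exact ⟨x, ⟨hx, hy⟩, rfl⟩
            · intro x hx y hy h
              exact hinj (mem_filter.mp hx).1 (mem_filter.mp hy).1 h
          omega
    refine (sum_le_sum hb).trans ?_
    rw [sum_ite_eq']
    split_ifs <;> simp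
  have h2 := two_central k hk
  have h3 := Kraw_one_nonpos (R.card - 1) k (by omega)
  have h4 : 2 * (2 * (k:ℤ) - 1) * (-Kraw 1 (R.card-1) k) ≤
     ((2*k).choose k : ℤ) * (-Kraw 1 (R.card-1) k) :=
    mul_le_mul_of_nonneg_right h2 (by linarith)
  linarith

lemma two_pow_phi {α : Type*} [DecidableEq α] (A R X P Q : Finset α) (σ : α → α)
    (hAR : Disjoint A R) (hXA : X ⊆ A) (hσ : ∀ x ∈ X, σ x ∈ R) (hP : P ⊆ A) (hQ : Q ⊆ R) :
    2 ^ X.card * phi X σ (P ∪ Q) =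
      ∑ T ∈ X.powerset, (∏ x ∈ T, sgn Q (σ x)) * ((-1) ^ (X \ T).card * ∏ x ∈ X \ T, sgn P x) := by
  unfold phi
  rw [← prod_const, ← prod_mul_distrib]
  have : ∀ x ∈ X, (2:ℤ) * ((if x ∈ P ∪ Q then 1 else 0) - (if σ x ∈ P ∪ Q then 1 else 0)) =
      sgn Q (σ x) + (- 1) * sgn P x := by
    intro x hx
    have h1 : x ∉ Q := fun h => disjoint_left.mp hAR (hXA hx) (hQ h)
    have h2 : σ x ∉ P := fun h => disjoint_left.mp hAR (hP h) (hσ x hx)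
    simp only [mem_union, h1, h2, or_false, false_or, sgn]
    split_ifs <;> norm_num
  rw [prod_congr rfl this, prod_add]
  apply sum_congr rfl
  intro T _
  rw [prod_mul_distrib, prod_const]

lemma Lam_bound {α : Type*} [DecidableEq α] (A R X : Finset α) (σ : α → α) (k : ℕ)
    (hk : 1 ≤ k) (hA : A.card = 2 * k) (hAR : Disjoint A R) (hr2 : R.card + 1 ≤ 2 * k)
    (hr1 : k ≤ R.card)
    (hXA : X ⊆ A) (hσ : ∀ x ∈ X, σ x ∈ R)
    (hinj : Set.InjOn σ X) (hX : X.Nonempty) :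
    2 * |∑ P ∈ powersetCard k A, ∑ Q ∈ powersetCard k R, phi X σ (P ∪ Q)| ≤
      ((2*k).choose k : ℤ) * (- Kraw 1 (R.card - 1) k) := by
  have hle : X.card ≤ R.card := card_le_card_of_injOn σ hσ hinj
  rcases hle.eq_or_lt with hj | hj
  · exact Lam_bound_full A R X σ k hk hA hr2 hr1 hXA hσ hinj hj
  set S := ∑ P ∈ powersetCard k A, ∑ Q ∈ powersetCard k R, phi X σ (P ∪ Q) with hS
  have h1 : 2 ^ X.card * S = ∑ T ∈ X.powerset,
      Kraw T.card (R.card - T.card) k *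
        ((-1) ^ (X \ T).card * Kraw (X.card - T.card) (2 * k - (X.card - T.card)) k) := by
    have hT : ∀ T ∈ X.powerset, Kraw T.card (R.card - T.card) k *
        ((-1) ^ (X \ T).card * Kraw (X.card - T.card) (2 * k - (X.card - T.card)) k) =
        ∑ P ∈ powersetCard k A, ∑ Q ∈ powersetCard k R,
         (∏ x ∈ T, sgn Q (σ x)) * ((-1) ^ (X \ T).card * ∏ x ∈ X \ T, sgn P x) := by
      intro T hT
      rw [mem_powerset] at hT
      have hinjT : Set.InjOn σ T := hinj.mono (by exact_mod_cast hT)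
      have e1 := sum_sgn R (T.image σ) (by
        intro y hy
        obtain ⟨x, hx, rfl⟩ := mem_image.mp hy
        exact hσ x (hT hx)) k
      rw [card_image_of_injOn hinjT] at e1
      have e2 := sum_sgn A (X \ T) (sdiff_subset.trans hXA) k
      rw [card_sdiff_of_subset hT, hA] at e2
      rw [← e1, ← e2, sum_comm, sum_mul]
      apply sum_congr rfl
      intro Q _
      rw [prod_image hinjT, mul_sum, mul_sum]
    rw [sum_congr rfl hT, sum_comm, hS, mul_sum]
    apply sum_congr rfl
    intro P hP
    rw [sum_comm, mul_sum]
    apply sum_congr rfl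
    intro Q hQ
    exact two_pow_phi A R X P Q σ hAR hXA hσ (mem_powersetCard.mp hP).1 (mem_powersetCard.mp hQ).1
  have h2 : 2 ^ X.card * |S| ≤ ∑ T ∈ X.powerset,
      (((2*k).choose k : ℤ) * (- Kraw 1 (R.card - 1) k)) *
        (if Even (X.card - T.card) then (1:ℤ) else 0) := by
    have : 2 ^ X.card * |S| = |2 ^ X.card * S| := by
      rw [abs_mul]; simp
    rw [this, h1]
    refine (abs_sum_le_sum_abs _ _).trans (sum_le_sum ?_)
    intro T hT
    have hTc := card_le_card (mem_powerset.mp hT)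
    have := term_bound k R.card X.card T.card hr2 hX.card_pos hj hTc
    rw [abs_mul, abs_mul, abs_pow]
    simpa using this
  rw [← mul_sum] at h2
  have h3 := card_even_subsets X hX
  have h4 : (0:ℤ) < 2 ^ X.card := by positivity
  apply le_of_mul_le_mul_left _ h4
  rw [← h3] at h2 ⊢
  linarith

end Lam

section Eig
open Finset

/-- Apply a transposition to a finset. -/
def sw {α : Type*} [DecidableEq α] (x y : α) (A : Finset α) : Finset α :=
  A.map (Equiv.swap x y).toEmbedding

variable {α : Type*} [DecidableEq α]

lemma mem_sw (x y z : α) (A : Finset α) : z ∈ sw x y A ↔ Equiv.swap x y z ∈ A := by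
  unfold sw
  rw [mem_map_equiv, Equiv.symm_swap]

lemma card_sw (x y : α) (A : Finset α) : (sw x y A).card = A.card := by
  unfold sw; rw [card_map]

lemma sw_sw (x y : α) (A : Finset α) : sw x y (sw x y A) = A := by
  ext z; simp [mem_sw]

lemma sw_inter (x y : α) (A B : Finset α) : sw x y A ∩ sw x y B = sw x y (A ∩ B) := by
  ext z; simp [mem_sw]

lemma sw_inj (x y : α) (A B : Finset α) : sw x y A = sw x y B ↔ A = B := by
  constructor
  · intro h
    have := congrArg (sw x y) h
    rwa [sw_sw, sw_sw] at this
  · rintro rfl; rfl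

lemma sw_comm (x y u v : α) (h1 : x ≠ u) (h2 : x ≠ v) (h3 : y ≠ u) (h4 : y ≠ v) (A : Finset α) :
    sw u v (sw x y A) = sw x y (sw u v A) := by
  ext z
  simp only [mem_sw]
  have : Equiv.swap x y (Equiv.swap u v z) = Equiv.swap u v (Equiv.swap x y z) := by
    simp only [Equiv.swap_apply_def]
    grind
  rw [this]

lemma sw_eq_self (x y : α) (A : Finset α) (h : x ∈ A ↔ y ∈ A) : sw x y A = A := by
  ext z
  rw [mem_sw, Equiv.swap_apply_def]
  grind

lemma phi_anti (X : Finset α) (σ : α → α) (hinj : Set.InjOn σ X) (hd : ∀ y ∈ X, σ y ∉ X)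
    (x : α) (hx : x ∈ X) (B : Finset α) : phi X σ (sw x (σ x) B) = - phi X σ B := by
  unfold phi
  rw [← mul_prod_erase X _ hx, ← mul_prod_erase X _ hx, ← neg_mul]
  congr 1
  · simp [mem_sw]
  · apply prod_congr rfl
    intro y hy
    have hyx := ne_of_mem_erase hy
    have hyX := mem_of_mem_erase hy
    have h1 : y ≠ σ x := fun h => hd x hx (h ▸ hyX)
    have h2 : σ y ≠ x := fun h => hd y hyX (h ▸ hx)
    have h3 : σ y ≠ σ x := fun h => hyx (hinj hyX hx h)
    simp only [mem_sw, Equiv.swap_apply_of_ne_of_ne hyx h1, Equiv.swap_apply_of_ne_of_ne h2 h3]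

lemma phi_sym (X : Finset α) (σ : α → α) (u v : α) (hu : u ∉ X) (hv : v ∉ X)
    (hu' : ∀ x ∈ X, σ x ≠ u) (hv' : ∀ x ∈ X, σ x ≠ v)
    (B : Finset α) : phi X σ (sw u v B) = phi X σ B := by
  unfold phi
  apply prod_congr rfl
  intro y hy
  have h1 : y ≠ u := fun h => hu (h ▸ hy)
  have h2 : y ≠ v := fun h => hv (h ▸ hy)
  simp only [mem_sw, Equiv.swap_apply_of_ne_of_ne h1 h2,
    Equiv.swap_apply_of_ne_of_ne (hu' y hy) (hv' y hy)]

lemma phi_self (X A : Finset α) (σ : α → α) (hX : X ⊆ A) (hσ : ∀ x ∈ X, σ x ∉ A) :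
    phi X σ A = 1 := by
  unfold phi
  apply prod_eq_one
  intro x hx
  simp [hX hx, hσ x hx]

lemma phi_zero (X B : Finset α) (σ : α → α) (x : α) (hx : x ∈ X) (h : x ∈ B ↔ σ x ∈ B) :
    phi X σ B = 0 := by
  unfold phi
  apply prod_eq_zero hx
  simp [h]

lemma sdiff_sw_lt (A B : Finset α) (u v : α) (hu : u ∈ A) (huB : u ∉ B) (hv : v ∈ B) (hvA : v ∉ A) :
    (A \ sw u v B).card < (A \ B).card := by
  apply card_lt_card
  rw [ssubset_iff_of_subset]
  · refine ⟨u, by simp [hu, huB], ?_⟩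
    simp [mem_sw, hv]
  · intro z hz
    rw [mem_sdiff, mem_sw] at hz
    rw [mem_sdiff]
    refine ⟨hz.1, fun hzB => hz.2 ?_⟩
    have h1 : z ≠ u := fun h => huB (h ▸ hzB)
    have h2 : z ≠ v := fun h => hvA (h ▸ hz.1)
    rwa [Equiv.swap_apply_of_ne_of_ne h1 h2]

lemma anti_zero (g : Finset α → ℝ) (x y : α) (hg : ∀ A, g (sw x y A) = - g A) (A : Finset α)
    (h : x ∈ A ↔ y ∈ A) : g A = 0 := by
  have := hg A
  rw [sw_eq_self x y A h] at this
  linarith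

/-- Uniqueness of the (anti)symmetric function. -/
lemma uniq (m : ℕ) (σ : Equiv.Perm α) (hσ : ∀ x, σ (σ x) = x) (g : Finset α → ℝ)
    (hanti : ∀ x, σ x ≠ x → ∀ A, g (sw x (σ x) A) = - g A)
    (hsym : ∀ u v, σ u = u → σ v = v → ∀ A, g (sw u v A) = g A)
    (A : Finset α) (hA : A.card = m)
    (hin : ∀ x, x ∈ A → σ x ≠ x → σ x ∉ A) (hout : ∀ x, x ∉ A → σ x ≠ x → σ x ∈ A) :
    ∀ d, ∀ B : Finset α, B.card = m → (A \ B).card = d →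
      g B = g A * (phi (A.filter (fun x => σ x ≠ x)) σ B : ℝ) := by
  set X := A.filter (fun x => σ x ≠ x) with hX
  have hXA : X ⊆ A := filter_subset _ _
  have hXσ : ∀ x ∈ X, σ x ∉ A := fun x hx => hin x (mem_filter.mp hx).1 (mem_filter.mp hx).2
  have hXX : ∀ x ∈ X, σ x ∉ X := fun x hx h => hXσ x hx (hXA h)
  intro d
  induction d using Nat.strong_induction_on with
  | _ d ih =>
    intro B hB hd
    by_cases hxB : ∃ x ∈ X, (x ∈ B ↔ σ x ∈ B)
    · obtain ⟨x, hx, h⟩ := hxB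
      rw [phi_zero X B σ x hx h, anti_zero g x (σ x) (hanti x (mem_filter.mp hx).2) B h]
      simp
    push Not at hxB
    by_cases hxB2 : ∃ x ∈ X, x ∉ B
    · obtain ⟨x, hx, h⟩ := hxB2
      have hs : σ x ∈ B := by
        rcases hxB x hx with h' | h'
        · exact absurd h'.1 h
        · exact h'.2
      have h1 := sdiff_sw_lt A B x (σ x) (hXA hx) h hs (hXσ x hx)
      have h2 := ih _ (by omega) (sw x (σ x) B) (by rw [card_sw, hB]) rfl
      rw [hanti x (mem_filter.mp hx).2, phi_anti X σ σ.injective.injOn hXX x hx] at h2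
      push_cast at h2
      linarith
    push Not at hxB2
    have hs : ∀ x ∈ X, σ x ∉ B := by
      intro x hx
      rcases hxB x hx with h' | h'
      · exact h'.2
      · exact absurd (hxB2 x hx) h'.1
    rcases Nat.eq_zero_or_pos d with h0 | hpos
    · have : A = B := by
        apply eq_of_subset_of_card_le
        · rw [← sdiff_eq_empty_iff_subset, ← card_eq_zero]; omega
        · omega
      rw [← this, phi_self X A σ hXA hXσ]; simp
    · obtain ⟨u, hu⟩ := card_pos.mp (hd ▸ hpos)
      have hBA : 0 < (B \ A).card := by
        have h1 := card_sdiff_add_card_inter A B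
        have h2 := card_sdiff_add_card_inter B A
        rw [inter_comm] at h2
        omega
      obtain ⟨v, hv⟩ := card_pos.mp hBA
      rw [mem_sdiff] at hu hv
      have hu1 : σ u = u := by
        by_contra h
        exact hu.2 (hxB2 u (mem_filter.mpr ⟨hu.1, h⟩))
      have hv1 : σ v = v := by
        by_contra h
        have h1 := hout v hv.2 h
        have h2 : σ v ∈ X := mem_filter.mpr ⟨h1, by rw [hσ]; exact fun h' => h h'.symm⟩
        have h3 := hs _ h2
        rw [hσ] at h3
        exact h3 hv.1
      have h1 := sdiff_sw_lt A B u v hu.1 hu.2 hv.1 hv.2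
      have h2 := ih _ (by omega) (sw u v B) (by rw [card_sw, hB]) rfl
      have key : ∀ w, σ w = w → w ∉ X ∧ ∀ x ∈ X, σ x ≠ w := by
        intro w hw
        refine ⟨fun h => (mem_filter.mp h).2 hw, fun x hx h => ?_⟩
        apply (mem_filter.mp hx).2
        have : σ (σ x) = σ w := by rw [h]
        rw [hσ, hw] at this
        rw [h, this]
      rw [hsym u v hu1 hv1, phi_sym X σ u v (key u hu1).1 (key v hv1).1 (key u hu1).2
        (key v hv1).2] at h2
      exact h2

variable [Fintype α]

/-- The inductive predicate. -/
def GoodPairs (M : Finset α → Finset α → ℝ) (l : ℝ) (j : ℕ) : Prop :=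
  ∃ σ : Equiv.Perm α, (∀ x, σ (σ x) = x) ∧ j ≤ σ.support.card ∧
    ∃ g : Finset α → ℝ, (∃ A, g A ≠ 0) ∧ (∀ A, ∑ B, M A B * g B = l * g A) ∧
      ∀ x, σ x ≠ x → ∀ A, g (sw x (σ x) A) = - g A

lemma eig_sw (M : Finset α → Finset α → ℝ)
    (hinv : ∀ x y A B, M (sw x y A) (sw x y B) = M A B) (l : ℝ) (g : Finset α → ℝ)
    (hg : ∀ A, ∑ B, M A B * g B = l * g A) (u v : α) (A : Finset α) :
    ∑ B, M A B * g (sw u v B) = l * g (sw u v A) := by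
  rw [← hg (sw u v A)]
  refine Fintype.sum_bijective (sw u v) ?_ _ _ ?_
  · exact Function.Involutive.bijective (sw_sw u v)
  · intro B; rw [hinv]

lemma step (M : Finset α → Finset α → ℝ)
    (hinv : ∀ x y A B, M (sw x y A) (sw x y B) = M A B) (m : ℕ)
    (hs1 : ∀ A B, A.card ≠ m → M A B = 0) (hs2 : ∀ A B, B.card ≠ m → M A B = 0)
    (l : ℝ) (hl : l ≠ 0) (j : ℕ) (h : GoodPairs M l j) :
    GoodPairs M l (j+1) ∨ ∃ (A X : Finset α) (σ : α → α), A.card = m ∧ X ⊆ A ∧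
      (∀ x ∈ X, σ x ∉ A) ∧ Set.InjOn σ X ∧ l = ∑ B, M A B * (phi X σ B : ℝ) := by
  obtain ⟨σ, hσ, hj, g, ⟨A0, hA0⟩, hg, hanti⟩ := h
  by_cases hex : ∃ u v, σ u = u ∧ σ v = v ∧ ∃ A, g (sw u v A) ≠ g A
  · left
    obtain ⟨u, v, hu, hv, A, hA⟩ := hex
    have huv : u ≠ v := by
      rintro rfl
      apply hA
      rw [sw_eq_self u u A Iff.rfl]
    have hfix : ∀ x w, σ w = w → (σ x = w ↔ x = w) := by
      intro x w hw
      constructor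
      · intro h
        have := congrArg σ h
        rwa [hσ, hw] at this
      · rintro rfl; exact hw
    have hval : ∀ x, (σ * Equiv.swap u v) x = if x = u then v else if x = v then u else σ x := by
      intro x
      rw [Equiv.Perm.mul_apply, Equiv.swap_apply_def]
      split_ifs <;> simp_all
    refine ⟨σ * Equiv.swap u v, ?_, ?_, fun A => g A - g (sw u v A), ⟨A, ?_⟩, ?_, ?_⟩
    · intro x
      rw [hval, hval]
      have h1 := hfix x u hu
      have h2 := hfix x v hv
      have h3 := hσ x
      grind
    · have : σ.support ⊂ (σ * Equiv.swap u v).support := by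
        rw [ssubset_iff_of_subset]
        · refine ⟨u, ?_, ?_⟩
          · rw [Equiv.Perm.mem_support, hval, if_pos rfl]; exact huv.symm
          · rw [Equiv.Perm.mem_support]; simp [hu]
        · intro x hx
          rw [Equiv.Perm.mem_support] at hx ⊢
          rw [hval]
          split_ifs with h1 h2
          · rw [h1]; exact huv.symm
          · rw [h2]; exact huv
          · exact hx
      have := card_lt_card this
      omega
    · intro h; apply hA; linarith
    · intro B
      simp only [mul_sub, sum_sub_distrib]
      rw [hg, eig_sw M hinv l g hg]
    · intro x hx B
      rw [hval] at hx ⊢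
      beta_reduce
      split_ifs at hx ⊢ with h1 h2
      · subst h1; rw [sw_sw]; ring
      · subst h2
        have : ∀ C, sw x u C = sw u x C := by
          intro C; unfold sw; rw [Equiv.swap_comm]
        rw [this, sw_sw]; ring
      · have h3 : σ x ≠ u := fun h => h1 ((hfix x u hu).mp h)
        have h4 : σ x ≠ v := fun h => h2 ((hfix x v hv).mp h)
        rw [sw_comm x (σ x) u v h1 h2 h3 h4, hanti x hx, hanti x hx]; ring
  · right
    push Not at hex
    have hsup : ∀ A, A.card ≠ m → g A = 0 := by
      intro A hA
      have := hg A
      rw [sum_eq_zero (fun B _ => by rw [hs1 A B hA, zero_mul])] at this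
      rcases mul_eq_zero.mp this.symm with h | h
      · exact absurd h hl
      · exact h
    have hA0m : A0.card = m := by
      by_contra h; exact hA0 (hsup A0 h)
    have hin : ∀ x, x ∈ A0 → σ x ≠ x → σ x ∉ A0 := fun x h1 h2 h3 =>
      hA0 (anti_zero g x (σ x) (hanti x h2) A0 (by simp [h1, h3]))
    have hout : ∀ x, x ∉ A0 → σ x ≠ x → σ x ∈ A0 := by
      intro x h1 h2
      by_contra h3
      exact hA0 (anti_zero g x (σ x) (hanti x h2) A0 (by simp [h1, h3]))
    have hu := uniq m σ hσ g hanti (fun u v h1 h2 A => hex u v h1 h2 A) A0 hA0m hin hout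
    refine ⟨A0, A0.filter (fun x => σ x ≠ x), σ, hA0m, filter_subset _ _, ?_,
      σ.injective.injOn, ?_⟩
    · intro x hx
      exact hin x (mem_filter.mp hx).1 (mem_filter.mp hx).2
    · have h1 := hg A0
      have h2 : ∑ B, M A0 B * g B =
          (∑ B, M A0 B * (phi (A0.filter (fun x => σ x ≠ x)) σ B : ℝ)) * g A0 := by
        rw [sum_mul]
        apply sum_congr rfl
        intro B _
        by_cases hB : B.card = m
        · rw [hu _ B hB rfl]; ring
        · rw [hs2 A0 B hB]; ring
      rw [h2] at h1
      exact (mul_right_cancel₀ hA0 h1).symm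

lemma eig_structure (M : Finset α → Finset α → ℝ)
    (hinv : ∀ x y A B, M (sw x y A) (sw x y B) = M A B) (m : ℕ)
    (hs1 : ∀ A B, A.card ≠ m → M A B = 0) (hs2 : ∀ A B, B.card ≠ m → M A B = 0)
    (l : ℝ) (hl : l ≠ 0) (f : Finset α → ℝ) (hf : f ≠ 0)
    (hfe : ∀ A, ∑ B, M A B * f B = l * f A) :
    ∃ (A X : Finset α) (σ : α → α), A.card = m ∧ X ⊆ A ∧
      (∀ x ∈ X, σ x ∉ A) ∧ Set.InjOn σ X ∧ l = ∑ B, M A B * (phi X σ B : ℝ) := by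
  by_contra hcon
  have hall : ∀ j, GoodPairs M l j := by
    intro j
    induction j with
    | zero =>
      refine ⟨1, by simp, by simp, f, Function.ne_iff.mp hf, hfe, by simp⟩
    | succ j ih => exact (step M hinv m hs1 hs2 l hl j ih).resolve_right hcon
  obtain ⟨σ, _, h, _⟩ := hall (Fintype.card α + 1)
  have := card_le_univ σ.support
  omega

end Eig

section Final
open Finset

/-- The kernel. -/
noncomputable def ker {α : Type*} [DecidableEq α] (k : ℕ) (mu c : ℝ) (A B : Finset α) : ℝ :=
  if A.card = 2 * k ∧ B.card = 2 * k then
    (if (A ∩ B).card = k then 1 else 0) + (if A = B then mu else 0) - c else 0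

lemma sum_split {α R : Type*} [DecidableEq α] [Fintype α] [AddCommMonoid R] (k : ℕ) (A : Finset α)
    (f : Finset α → R) :
    ∑ B ∈ univ.filter (fun B : Finset α => B.card = 2 * k ∧ (A ∩ B).card = k), f B =
      ∑ P ∈ powersetCard k A, ∑ Q ∈ powersetCard k Aᶜ, f (P ∪ Q) := by
  rw [← sum_product']
  symm
  refine sum_nbij' (fun p => p.1 ∪ p.2) (fun B => (A ∩ B, B \ A)) ?_ ?_ ?_ ?_ ?_
  · rintro ⟨P, Q⟩ h
    simp only [mem_product, mem_powersetCard] at h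
    obtain ⟨⟨hP, hPc⟩, hQ, hQc⟩ := h
    have hd : Disjoint P Q := disjoint_left.mpr fun x hx hx' =>
      (mem_compl.mp (hQ hx')) (hP hx)
    have he : A ∩ (P ∪ Q) = P := by
      ext x
      have h1 := @hP x
      have h2 := @hQ x
      simp only [mem_inter, mem_union, mem_compl] at *
      tauto
    simp only [mem_filter, mem_univ, true_and]
    rw [he, card_union_of_disjoint hd]
    omega
  · intro B h
    simp only [mem_filter, mem_univ, true_and] at h
    simp only [mem_product, mem_powersetCard]
    refine ⟨⟨inter_subset_left, h.2⟩, ?_, ?_⟩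
    · intro x hx; simp only [mem_sdiff, mem_compl] at *; exact hx.2
    · have := card_sdiff_add_card_inter B A
      rw [inter_comm] at this
      omega
  · rintro ⟨P, Q⟩ h
    simp only [mem_product, mem_powersetCard] at h
    obtain ⟨⟨hP, hPc⟩, hQ, hQc⟩ := h
    ext x
    · have h1 := @hP x
      have h2 := @hQ x
      simp only [mem_inter, mem_union, mem_compl] at *
      tauto
    · have h1 := @hP x
      have h2 := @hQ x
      simp only [mem_sdiff, mem_union, mem_compl] at *
      tauto
  · intro B _
    ext x
    simp only [mem_union, mem_inter, mem_sdiff]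
    tauto
  · intro _ _; rfl

lemma degree_count {α : Type*} [DecidableEq α] [Fintype α] (k : ℕ) (A : Finset α)
    (hA : A.card = 2 * k) :
    (univ.filter (fun B : Finset α => B.card = 2 * k ∧ (A ∩ B).card = k)).card =
      (2*k).choose k * (Fintype.card α - 2*k).choose k := by
  rw [card_eq_sum_ones, sum_split]
  simp [card_compl, hA]

lemma sum_phi_zero {α : Type*} [DecidableEq α] [Fintype α] (m : ℕ) (X : Finset α) (σ : α → α)
    (hinj : Set.InjOn σ X) (hd : ∀ y ∈ X, σ y ∉ X) (hX : X.Nonempty) :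
    ∑ B ∈ univ.filter (fun B : Finset α => B.card = m), phi X σ B = 0 := by
  obtain ⟨x, hx⟩ := hX
  have h : ∑ B ∈ univ.filter (fun B : Finset α => B.card = m), phi X σ B =
      ∑ B ∈ univ.filter (fun B : Finset α => B.card = m), - phi X σ B := by
    refine sum_nbij' (sw x (σ x)) (sw x (σ x)) ?_ ?_ ?_ ?_ ?_
    · intro B hB; simpa [card_sw] using hB
    · intro B hB; simpa [card_sw] using hB
    · intro B _; exact sw_sw _ _ _
    · intro B _; exact sw_sw _ _ _
    · intro B _; rw [phi_anti X σ hinj hd x hx]; simp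
  rw [sum_neg_distrib] at h
  omega

lemma row_sum {α : Type*} [DecidableEq α] [Fintype α] (k : ℕ) (mu c : ℝ) (A : Finset α)
    (hA : A.card = 2 * k) (p : Finset α → ℤ) :
    ∑ B, ker k mu c A B * (p B : ℝ) =
      ((∑ P ∈ powersetCard k A, ∑ Q ∈ powersetCard k Aᶜ, p (P ∪ Q) : ℤ) : ℝ) + mu * (p A : ℝ)
       - c * ((∑ B ∈ univ.filter (fun B : Finset α => B.card = 2 * k), p B : ℤ) : ℝ) := by
  rw [← sum_split, sum_filter, sum_filter]
  push_cast
  have hmu : mu * (p A : ℝ) = ∑ B, if A = B then mu * (p B : ℝ) else 0 := by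
    rw [sum_ite_eq]; simp
  rw [hmu, mul_sum, ← sum_add_distrib, ← sum_sub_distrib]
  apply sum_congr rfl
  intro B _
  unfold ker
  by_cases hB : B.card = 2 * k
  · simp only [hA, hB, true_and, and_self, if_true]
    split_ifs <;> push_cast <;> ring
  · have : A ≠ B := by rintro rfl; exact hB hA
    simp [hB, this]

lemma ker_posSemidef (k n : ℕ) (hk : 1 ≤ k) (hn1 : 3 * k ≤ n) (hn2 : n + 1 ≤ 4 * k)
    (mu c : ℝ)
    (hmu : 2 * mu = ((2*k).choose k : ℝ) * ((- Kraw 1 (n - 2*k - 1) k : ℤ) : ℝ))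
    (hc : c * (n.choose (2*k) : ℝ) = ((2*k).choose k : ℝ) * ((n-2*k).choose k : ℝ) + mu) :
    (Matrix.of (ker (α := Fin n) k mu c)).PosSemidef := by
  have hH : (Matrix.of (ker (α := Fin n) k mu c)).IsHermitian := by
    ext A B
    simp only [Matrix.conjTranspose_apply, Matrix.of_apply, star_trivial, ker]
    rw [inter_comm]
    simp only [eq_comm (a := B) (b := A), and_comm (a := B.card = 2 * k)]
  rw [hH.posSemidef_iff_eigenvalues_nonneg]
  intro i
  by_contra hneg
  have hneg : hH.eigenvalues i < 0 := not_le.mp hneg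
  have he := hH.mulVec_eigenvectorBasis i
  have hne : (hH.eigenvectorBasis i).ofLp ≠ 0 := by
    intro h0
    have := hH.eigenvectorBasis.orthonormal.ne_zero i
    apply this
    ext j
    exact congrFun h0 j
  set l := hH.eigenvalues i with hl
  obtain ⟨A, X, σ, hA, hXA, hσ, hinj, hlam⟩ := eig_structure (ker (α := Fin n) k mu c) (by
      intro x y A B
      simp only [ker, card_sw, sw_inter, sw_inj]) (2*k)
    (by intro A B h; simp [ker, h]) (by intro A B h; simp [ker, h]) l hneg.ne
    (hH.eigenvectorBasis i).ofLp hne (by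
      intro A
      have := congrFun he A
      simpa [Matrix.mulVec, dotProduct] using this)
  rw [row_sum k mu c A hA, phi_self X A σ hXA hσ] at hlam
  have hR : (Aᶜ).card = n - 2 * k := by rw [card_compl, hA, Fintype.card_fin]
  rcases X.eq_empty_or_nonempty with rfl | hX
  · have h1 : ∀ B : Finset (Fin n), phi ∅ σ B = 1 := by intro B; simp [phi]
    have h2 : (univ.filter (fun B : Finset (Fin n) => B.card = 2 * k)).card = n.choose (2*k) := by
      have : univ.filter (fun B : Finset (Fin n) => B.card = 2 * k) = powersetCard (2*k) univ := by
        ext B; simp [mem_powersetCard]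
      rw [this, card_powersetCard]; simp
    simp only [h1, sum_const, card_powersetCard, hA, hR, h2] at hlam
    simp at hlam
    linarith
  · rw [sum_phi_zero (2*k) X σ hinj (fun y hy h => hσ y hy (hXA h)) hX] at hlam
    have hb := Lam_bound A Aᶜ X σ k hk hA disjoint_compl_right (by omega) (by omega) hXA
      (fun x hx => mem_compl.mpr (hσ x hx)) hinj hX
    rw [hR] at hb
    set S := ∑ P ∈ powersetCard k A, ∑ Q ∈ powersetCard k Aᶜ, phi X σ (P ∪ Q) with hS
    have h3 := neg_abs_le S
    have h4 : -(((2*k).choose k : ℤ) * (- Kraw 1 (n - 2*k - 1) k)) ≤ 2 * S := by linarith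
    have h5 : -(((2*k).choose k : ℝ) * ((- Kraw 1 (n - 2*k - 1) k : ℤ) : ℝ)) ≤ 2 * (S:ℝ) := by
      exact_mod_cast h4
    push_cast at hlam h5 hmu
    linarith

lemma half_degree (k n : ℕ) (hk : 1 ≤ k) (F : Finset (Finset (Fin n)))
    (hcard : ∀ A ∈ F, A.card = 2 * k)
    (hfree : ∀ A ∈ F, ∀ B ∈ F, ∀ C ∈ F, A ≠ B → A ≠ C → B ≠ C →
      symmDiff (symmDiff A B) C ≠ ∅) (A : Finset (Fin n)) (hA : A ∈ F) :
    2 * (F.filter (fun B => (A ∩ B).card = k)).card ≤ (2*k).choose k * (n - 2*k).choose k := by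
  have hd := degree_count k A (hcard A hA)
  rw [Fintype.card_fin] at hd
  rw [← hd, two_mul]
  set G := F.filter (fun B => (A ∩ B).card = k) with hG
  have hinj : Set.InjOn (fun B => symmDiff A B) (G : Set (Finset (Fin n))) := by
    intro B _ C _ h
    exact symmDiff_right_injective A h
  have hdisj : Disjoint G (G.image (fun B => symmDiff A B)) := by
    rw [disjoint_left]
    intro C hC hC'
    obtain ⟨B, hB, rfl⟩ := mem_image.mp hC'
    rw [hG, mem_filter] at hB hC
    have hAc := hcard A hA
    have h1 : A ≠ B := by
      rintro rfl
      have := hB.2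
      rw [inter_self] at this; omega
    have h2 : A ≠ symmDiff A B := by
      intro h
      have h' := hC.2
      rw [← h, inter_self] at h'; omega
    have h3 : B ≠ symmDiff A B := by
      intro h
      have : A = ∅ := by
        have := congrArg (fun Z => symmDiff Z B) h
        simpa using this.symm
      rw [this] at hAc; simp at hAc; omega
    exact hfree A hA B hB.1 _ hC.1 h1 h2 h3 (by
      have := symmDiff_self (symmDiff A B)
      simpa using this)
  have hsum : (G ∪ G.image (fun B => symmDiff A B)).card = G.card + G.card := by
    rw [card_union_of_disjoint hdisj, card_image_of_injOn hinj]
  rw [← hsum]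
  apply card_le_card
  intro C hC
  rw [mem_filter]
  refine ⟨mem_univ _, ?_⟩
  rcases mem_union.mp hC with h | h
  · rw [hG, mem_filter] at h
    exact ⟨hcard C h.1, h.2⟩
  · obtain ⟨B, hB, rfl⟩ := mem_image.mp h
    rw [hG, mem_filter] at hB
    have hAc := hcard A hA
    have hBc := hcard B hB.1
    have e1 := card_sdiff_add_card_inter A B
    have e2 := card_sdiff_add_card_inter B A
    rw [inter_comm B A] at e2
    have e3 : A ∩ symmDiff A B = A \ B := by
      ext x; simp only [mem_inter, mem_symmDiff, mem_sdiff]; tauto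
    have e4 : (symmDiff A B).card = (A \ B).card + (B \ A).card := by
      rw [symmDiff_def]
      exact card_union_of_disjoint disjoint_sdiff_sdiff
    rw [e3]
    omega

end Final

/-- **Frankl's triangle problem, uniform version, small `n`.** Let `k ≥ 1` and
`3k ≤ n ≤ 4k - 1`. If `F` is a family of `2k`-element subsets of an `n`-element ground set
containing no three pairwise distinct members `A, B, C` with empty triple symmetric
difference `A ∆ B ∆ C = ∅`, then `|F| ≤ C(n-1, 2k-1)`. -/
theorem frankl_triangle_uniform (k n : ℕ) (hk : 1 ≤ k)
    (hn1 : 3 * k ≤ n) (hn2 : n ≤ 4 * k - 1)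
    (F : Finset (Finset (Fin n)))
    (hcard : ∀ A ∈ F, A.card = 2 * k)
    (hfree : ∀ A ∈ F, ∀ B ∈ F, ∀ C ∈ F, A ≠ B → A ≠ C → B ≠ C →
      symmDiff (symmDiff A B) C ≠ ∅) :
    F.card ≤ (n - 1).choose (2 * k - 1) := by
  rcases F.eq_empty_or_nonempty with rfl | hF
  · simp
  set a : ℝ := ((2*k).choose k : ℝ) with ha
  set b : ℝ := ((n-2*k).choose k : ℝ) with hb
  set κ : ℝ := ((- Kraw 1 (n - 2*k - 1) k : ℤ) : ℝ) with hκ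
  set N : ℝ := (n.choose (2*k) : ℝ) with hN
  have hapos : 0 < a := by rw [ha]; exact_mod_cast Nat.choose_pos (by omega)
  have hbpos : 0 < b := by rw [hb]; exact_mod_cast Nat.choose_pos (by omega)
  have hNpos : 0 < N := by rw [hN]; exact_mod_cast Nat.choose_pos (by omega)
  obtain ⟨mu, hmu⟩ : ∃ mu : ℝ, 2 * mu = a * κ := ⟨a * κ / 2, by ring⟩
  obtain ⟨c, hc⟩ : ∃ c : ℝ, c * N = a * b + mu := ⟨(a * b + mu) / N, by field_simp⟩
  have hps := ker_posSemidef k n hk hn1 (by omega) mu c hmu hc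
  have hκ2 : ((n:ℝ) - 2 * k) * κ = (4 * k - n) * b := by
    have h1 := Kraw_rec0 (n - 2*k - 1) k
    rw [Kraw_zero_left, show n - 2*k - 1 + 1 = n - 2*k by omega] at h1
    have h2 : ((n - 2*k - 1 : ℕ) : ℤ) = n - 2*k - 1 := by omega
    rw [h2] at h1
    have h3 : ((n:ℤ) - 2 * k) * (- Kraw 1 (n - 2*k - 1) k) = (4 * k - n) * ((n-2*k).choose k : ℤ) := by
      linarith
    rw [hκ, hb]
    exact_mod_cast h3
  have hq := hps.dotProduct_mulVec_nonneg (fun A => if A ∈ F then (1:ℝ) else 0)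
  have hq2 : 0 ≤ ∑ A ∈ F, ∑ B ∈ F, ker k mu c A B := by
    simpa [dotProduct, Matrix.mulVec, Finset.sum_ite_mem] using hq
  have hrow : ∀ A ∈ F, ∑ B ∈ F, ker k mu c A B ≤ a * b / 2 + mu - c * F.card := by
    intro A hA
    have h1 : ∑ B ∈ F, ker k mu c A B =
        ((F.filter (fun B => (A ∩ B).card = k)).card : ℝ) + mu - c * F.card := by
      have h2 : ∀ B ∈ F, ker k mu c A B =
          (if (A ∩ B).card = k then 1 else 0) + (if A = B then mu else 0) - c := by
        intro B hB
        unfold ker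
        rw [if_pos ⟨hcard A hA, hcard B hB⟩]
      rw [Finset.sum_congr rfl h2, Finset.sum_sub_distrib, Finset.sum_add_distrib,
        Finset.sum_ite_eq, if_pos hA, Finset.sum_boole]
      simp [mul_comm]
    have h3 := half_degree k n hk F hcard hfree A hA
    have h4 : 2 * ((F.filter (fun B => (A ∩ B).card = k)).card : ℝ) ≤ a * b := by
      rw [ha, hb]; exact_mod_cast h3
    rw [h1]; linarith
  have htot := hq2.trans (Finset.sum_le_sum hrow)
  rw [Finset.sum_const, nsmul_eq_mul] at htot
  have hFpos : (0:ℝ) < F.card := by exact_mod_cast hF.card_pos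
  have h5 : c * F.card ≤ a * b / 2 + mu := by
    have := nonneg_of_mul_nonneg_right htot hFpos
    linarith
  have h6 : (a * b + mu) * F.card ≤ N * (a * b / 2 + mu) := by
    rw [← hc]
    have := mul_le_mul_of_nonneg_left h5 hNpos.le
    linarith
  have hrpos : (0:ℝ) < (n:ℝ) - 2 * k := by
    have : (2 * k : ℝ) < n := by exact_mod_cast (by omega : 2 * k < n)
    linarith
  -- multiply by 2 (n - 2k)
  have h7 : 2 * ((n:ℝ) - 2*k) * mu = (4*k-n) * (a * b) := by
    linear_combination ((n:ℝ) - 2*k) * hmu + a * hκ2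
  have h8 := mul_le_mul_of_nonneg_left h6 (by linarith : (0:ℝ) ≤ 2 * ((n:ℝ) - 2 * k))
  have h9 : (a * b) * (n * F.card) ≤ (a * b) * (2 * k * N) := by
    have e1 : 2 * ((n:ℝ) - 2 * k) * ((a * b + mu) * F.card) = (a * b) * (n * F.card) := by
      linear_combination (F.card : ℝ) * h7
    have e2 : 2 * ((n:ℝ) - 2 * k) * (N * (a * b / 2 + mu)) = (a * b) * (2 * k * N) := by
      linear_combination N * h7
    rw [e1, e2] at h8
    exact h8
  have h10 := le_of_mul_le_mul_left h9 (by positivity)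
  have h11 : n * F.card ≤ 2 * k * n.choose (2 * k) := by
    rw [hN] at h10
    exact_mod_cast h10
  have h12 : n * (n-1).choose (2*k-1) = n.choose (2*k) * (2*k) := by
    have := Nat.add_one_mul_choose_eq (n-1) (2*k-1)
    rwa [show n - 1 + 1 = n by omega, show 2*k-1+1 = 2*k by omega] at this
  have h13 : n * F.card ≤ n * (n-1).choose (2*k-1) := by
    rw [h12]; linarith
  exact Nat.le_of_mul_le_mul_left h13 (by omega)
end

section
/- Let k ≥ 1 and n ≥ 4k. If F is a family of 2k-element subsets of {1,…,n} that contains no three pairwise distinct members A, B, C with empty triple symmetric difference A Δ B Δ C = ∅, then (4k - 1)·|F| ≤ 2k·C(n, 2k), i.e. |F| ≤ (2k/(4k-1))·(n choose 2k). -/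
namespace FrT
open Finset

/-- recursive moments of a balanced sign vector of length `2k` -/
noncomputable def mm (k : ℕ) : ℕ → ℝ
  | 0 => 1
  | 1 => 0
  | (s+2) => -((s:ℝ)+1) / (2*(k:ℝ) - s - 1) * mm k s

lemma mm_odd (k t : ℕ) : mm k (2*t+1) = 0 := by
  induction t with
  | zero => simp [mm]
  | succ t ih =>
    have : 2*(t+1)+1 = (2*t+1)+2 := by ring
    rw [this, mm, ih, mul_zero]

lemma mm_odd' (k r : ℕ) (h : Odd r) : mm k r = 0 := by
  obtain ⟨t, rfl⟩ := h
  exact mm_odd k t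

lemma mm_even (k t : ℕ) (ht : t ≤ k) :
    mm k (2*t) * ((2*k).choose (2*t)) = (-1)^t * (k.choose t) := by
  induction t with
  | zero => simp [mm]
  | succ t ih =>
    have ih := ih (by omega)
    have e : 2*(t+1) = (2*t)+2 := by ring
    rw [e, mm]
    have h1 : ((k.choose (t+1) : ℕ):ℝ) * (t+1) = k.choose t * (k - t) := by
      have := Nat.choose_succ_right_eq k t
      have h2 : ((k - t : ℕ):ℝ) = k - t := by rw [Nat.cast_sub (by omega)]
      rw [← h2]; exact_mod_cast this
    have h2 : (((2*k).choose (2*t+1) : ℕ):ℝ) * (2*t+1) = (2*k).choose (2*t) * (2*k - 2*t) := by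
      have := Nat.choose_succ_right_eq (2*k) (2*t)
      have h2 : ((2*k - 2*t : ℕ):ℝ) = 2*k - 2*t := by rw [Nat.cast_sub (by omega)]; push_cast; ring
      rw [← h2]; exact_mod_cast this
    have h3 : (((2*k).choose (2*t+2) : ℕ):ℝ) * (2*t+2) = (2*k).choose (2*t+1) * (2*k - 2*t-1) := by
      have := Nat.choose_succ_right_eq (2*k) (2*t+1)
      have h2 : ((2*k - (2*t+1) : ℕ):ℝ) = 2*k - 2*t-1 := by
        rw [Nat.cast_sub (by omega)]; push_cast; ring
      rw [← h2]; exact_mod_cast this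
    have hk : (t:ℝ) + 1 ≤ k := by exact_mod_cast ht
    have hne : (2*(k:ℝ) - 2*t - 1) ≠ 0 := by linarith
    have ht0 : (0:ℝ) ≤ t := by positivity
    push_cast
    rw [div_mul_eq_mul_div, div_mul_eq_mul_div, div_eq_iff hne]
    have : ((t:ℝ)+1)*2 ≠ 0 := by positivity
    apply mul_right_cancel₀ this
    rw [pow_succ]
    linear_combination (-(2*(t:ℝ)+1) * mm k (2*t)) * h3 - mm k (2*t) * (2*(k:ℝ) - 2*t - 1) * h2 - (2*(k:ℝ) - 2*t - 1) * (2*(k:ℝ)-2*t) * ih + 2*(-1)^t*(2*(k:ℝ) - 2*t - 1)*h1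

lemma mm_abs (k t : ℕ) (ht : t ≤ k) :
    |mm k (2*t)| = (k.choose t) / ((2*k).choose (2*t)) := by
  have h := mm_even k t ht
  have hp : (0:ℝ) < (2*k).choose (2*t) := by exact_mod_cast Nat.choose_pos (by omega)
  rw [eq_div_iff hp.ne']
  have := congrArg abs h
  rw [abs_mul, abs_mul, abs_pow] at this
  simpa using this

lemma mm_abs_symm (k t : ℕ) (ht : t ≤ k) : |mm k (2*(k-t))| = |mm k (2*t)| := by
  rw [mm_abs k t ht, mm_abs k (k-t) (by omega), Nat.choose_symm ht, Nat.mul_sub,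
    Nat.choose_symm (by omega)]

lemma mm_half (k t : ℕ) (h1 : 1 ≤ t) (ht : 2*t ≤ k) : |mm k (2*t)| ≤ 1/(2*(k:ℝ)-1) := by
  induction t, h1 using Nat.le_induction with
  | base =>
    have hk : (2:ℝ) ≤ k := by exact_mod_cast ht
    simp only [mul_one, mm]
    rw [abs_div]
    simp only [Nat.cast_zero, zero_add, sub_zero, abs_neg, abs_one]
    rw [abs_of_pos (by linarith)]
  | succ t h ih =>
    have ih := ih (by omega)
    have e : 2*(t+1) = (2*t)+2 := by ring
    have hk : 2*((t:ℝ) + 1) ≤ k := by exact_mod_cast ht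
    rw [e, mm, abs_mul]
    have ht0 : (0:ℝ) ≤ t := by positivity
    have : |-(((2*t:ℕ):ℝ)+1) / (2*(k:ℝ) - ((2*t:ℕ):ℝ) - 1)| ≤ 1 := by
      push_cast
      rw [abs_div, abs_neg, abs_of_pos (by linarith), abs_of_pos (by linarith), div_le_one (by linarith)]
      linarith
    calc _ ≤ 1 * |mm k (2*t)| := by gcongr
      _ ≤ _ := by simpa using ih

lemma mm_bound (k t : ℕ) (h1 : 1 ≤ t) (ht : t + 1 ≤ k) : |mm k (2*t)| ≤ 1/(2*(k:ℝ)-1) := by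
  by_cases h : 2*t ≤ k
  · exact mm_half k t h1 h
  · rw [← mm_abs_symm k t (by omega)]
    exact mm_half k (k-t) (by omega) (by omega)

lemma mm_top (k : ℕ) : |mm k (2*k)| = 1 := by
  rw [mm_abs k k le_rfl]; simp

noncomputable def lam (k j : ℕ) : ℝ :=
  (∑ r ∈ range (j+1), (-1:ℝ)^(j-r) * (j.choose r) * (mm k r * mm k (j-r))) / 2^j

lemma sum_even_choose (j : ℕ) (hj : j ≠ 0) :
    ∑ r ∈ range (j+1), ((j.choose r : ℕ):ℝ) * ((1 + (-1)^r)/2) = 2^j/2 := by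
  have h1 : ∑ r ∈ range (j+1), ((j.choose r : ℕ):ℝ) = 2^j := by
    exact_mod_cast Nat.sum_range_choose j
  have h2 : ∑ r ∈ range (j+1), ((-1:ℝ)^r * (j.choose r : ℕ)) = 0 := by
    have := Int.alternating_sum_range_choose_of_ne hj
    exact_mod_cast this
  calc _ = (∑ r ∈ range (j+1), ((j.choose r : ℕ):ℝ) + ∑ r ∈ range (j+1), ((-1:ℝ)^r * (j.choose r : ℕ)))/2 := by
        rw [← sum_add_distrib, sum_div]; apply sum_congr rfl; intros; ring
    _ = _ := by rw [h1, h2, add_zero]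

lemma lam_bound (k j : ℕ) (hj : 1 ≤ j) (hjk : j ≤ 2*k) : -(1/(4*(k:ℝ)-2)) ≤ lam k j := by
  have hk : 1 ≤ k := by omega
  have hkR : (1:ℝ) ≤ k := by exact_mod_cast hk
  rcases Nat.even_or_odd j with he | ho
  swap
  · have : lam k j = 0 := by
      unfold lam
      rw [sum_eq_zero, zero_div]
      intro r hr
      have hr : r ≤ j := by simpa [Nat.lt_succ_iff] using hr
      rcases Nat.even_or_odd r with h | h
      · rw [mm_odd' k (j-r) (Nat.Odd.sub_even hr ho h)]; ring
      · rw [mm_odd' k r h]; ring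
    rw [this, neg_nonpos]
    apply one_div_nonneg.2; linarith
  obtain ⟨t, ht⟩ := he
  have ht : j = 2*t := by omega
  by_cases h2 : j = 2
  · subst h2
    have : lam k 2 = -(1/(4*(k:ℝ)-2)) := by
      simp only [lam, sum_range_succ, mm, range_zero, sum_empty]
      have : 2*(k:ℝ)-1 ≠ 0 := by linarith
      have e : 4*(k:ℝ)-2 = 2*(2*(k:ℝ)-1) := by ring
      rw [e]
      simp [mm]
      field_simp
      try ring
    exact this.ge
  have ht2 : 2 ≤ t := by omega
  have hk2 : (2:ℝ) ≤ k := by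
    have : 2 ≤ k := by omega
    exact_mod_cast this
  set u : ℝ := 2*(k:ℝ)-1 with hu
  have hu3 : 3 ≤ u := by linarith
  have hterm : ∀ r ∈ range (j+1), |(-1:ℝ)^(j-r) * (j.choose r) * (mm k r * mm k (j-r))| ≤
      ((j.choose r : ℕ):ℝ) * ((1 + (-1)^r)/2) * (1/u^2) +
        ((if r = 0 then (|mm k j| - 1/u^2) else 0) + (if r = j then (|mm k j| - 1/u^2) else 0)) := by
    intro r hr
    have hr : r ≤ j := by simpa [Nat.lt_succ_iff] using hr
    have ha : |(-1:ℝ)^(j-r) * (j.choose r) * (mm k r * mm k (j-r))| = (j.choose r) * (|mm k r| * |mm k (j-r)|) := by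
      rw [abs_mul, abs_mul, abs_mul, abs_pow]; simp
    rw [ha]
    by_cases h0 : r = 0
    · subst h0
      have : ¬ (0 = j) := by omega
      simp [this, mm]
    by_cases hjj : r = j
    · subst hjj
      have : (-1:ℝ)^r = 1 := by rw [ht, pow_mul]; simp
      simp [h0, mm, this]
    simp only [h0, hjj, if_false, add_zero]
    rcases Nat.even_or_odd r with h | h
    · rw [h.neg_one_pow]
      obtain ⟨s, hs⟩ := h
      have e1 : r = 2*s := by omega
      have e2 : j - r = 2*(t-s) := by omega
      have b1 : |mm k r| ≤ 1/u := by rw [e1]; exact mm_bound k s (by omega) (by omega)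
      have b2 : |mm k (j-r)| ≤ 1/u := by rw [e2]; exact mm_bound k (t-s) (by omega) (by omega)
      calc _ ≤ ((j.choose r : ℕ):ℝ) * (1/u * (1/u)) := by gcongr
        _ = _ := by field_simp; norm_num
    · rw [mm_odd' k r h, h.neg_one_pow]; simp
  have hsum : |∑ r ∈ range (j+1), (-1:ℝ)^(j-r) * (j.choose r) * (mm k r * mm k (j-r))| ≤
      2^j/2 * (1/u^2) + 2*(|mm k j| - 1/u^2) := by
    refine (abs_sum_le_sum_abs _ _).trans ((sum_le_sum hterm).trans ?_)
    rw [sum_add_distrib, ← sum_mul, sum_even_choose j (by omega), sum_add_distrib,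
      sum_ite_eq', sum_ite_eq']
    simp
    linarith
  have hfin : 2^j/2 * (1/u^2) + 2*(|mm k j| - 1/u^2) ≤ 2^j * (1/(2*u)) := by
    obtain ⟨P, hP⟩ : ∃ P : ℝ, P = 2^j/2 := ⟨_, rfl⟩
    have hP2 : (2:ℝ)^j = 2*P := by rw [hP]; ring
    have hupos : 0 < u := by linarith
    rw [← hP, hP2]
    have hP8 : 2 ≤ P := by
      have : (2:ℝ)^2 ≤ 2^j := pow_le_pow_right₀ (by norm_num) (by omega)
      rw [hP]; linarith
    have : P * (1/u^2) + 2*(|mm k j| - 1/u^2) = (P + 2*u^2*|mm k j| - 2)/u^2 := by field_simp; ring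
    rw [this]
    have : 2*P*(1/(2*u)) = P*u/u^2 := by field_simp
    rw [this]
    apply div_le_div_of_nonneg_right _ (by positivity)
    by_cases htk : t = k
    · rw [ht, htk, mm_top]
      have h3 : 2*(u+1) ≤ P := by
        have hb : ∀ k : ℕ, 2 ≤ k → 8*k ≤ 2^(2*k) := by
          intro k hk
          induction k, hk using Nat.le_induction with
          | base => norm_num
          | succ k hk ih => 
            have : 2^(2*(k+1)) = 4 * 2^(2*k) := by ring
            omega
        have := hb k (by omega)
        have : (8*k:ℝ) ≤ 2^(2*k) := by exact_mod_cast this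
        rw [hP, ht, htk]; linarith
      nlinarith
    · have hb := mm_bound k t (by omega) (by omega)
      rw [← ht, ← hu] at hb
      have : u^2*|mm k j| ≤ u^2*(1/u) := by gcongr
      have e : u^2*(1/u) = u := by field_simp
      nlinarith
  have : |lam k j| ≤ 1/(4*(k:ℝ)-2) := by
    unfold lam
    rw [abs_div, abs_of_pos (by positivity : (0:ℝ) < 2^j), div_le_iff₀ (by positivity)]
    refine (hsum.trans hfin).trans (le_of_eq ?_)
    rw [mul_comm, hu]; congr 2; ring
  exact (abs_le.1 this).1

set_option linter.unusedSectionVars false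

section comb
variable {α : Type*} [DecidableEq α]

/-- the sign of `i` in `B` -/
def sg (B : Finset α) (i : α) : ℝ := if i ∈ B then 1 else -1

lemma sg_sq (B : Finset α) (i : α) : sg B i * sg B i = 1 := by
  unfold sg; split_ifs <;> norm_num

def chi (S B : Finset α) : ℝ := ∏ i ∈ S, sg B i

def kap (k : ℕ) (X S : Finset α) : ℝ := ∑ B ∈ powersetCard k X, chi S B

lemma kap_swap (k : ℕ) (X R : Finset α) (a b : α) (ha : a ∈ X) (hb : b ∈ X)
    (haR : a ∉ R) (hbR : b ∉ R) : kap k X (insert a R) = kap k X (insert b R) := by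
  unfold kap
  have hX : X.map (Equiv.swap a b).toEmbedding = X := by
    ext x
    simp only [mem_map_equiv, Equiv.symm_swap]
    rcases eq_or_ne x a with rfl | h1
    · simp [ha, hb]
    rcases eq_or_ne x b with rfl | h2
    · simp [ha, hb]
    rw [Equiv.swap_apply_of_ne_of_ne h1 h2]
  have hm : ∀ B ∈ powersetCard k X, B.map (Equiv.swap a b).toEmbedding ∈ powersetCard k X := by
    intro B hB
    rw [mem_powersetCard] at hB ⊢
    refine ⟨?_, by simpa using hB.2⟩
    conv_rhs => rw [← hX]
    exact map_subset_map.2 hB.1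
  have hinv : ∀ B : Finset α, (B.map (Equiv.swap a b).toEmbedding).map (Equiv.swap a b).toEmbedding = B := by
    intro B; ext x; simp [mem_map_equiv]
  refine sum_bij' (fun B _ => B.map (Equiv.swap a b).toEmbedding)
    (fun B _ => B.map (Equiv.swap a b).toEmbedding) hm hm (fun B _ => hinv B) (fun B _ => hinv B) ?_
  intro B hB
  unfold chi
  rw [prod_insert haR, prod_insert hbR]
  congr 1
  · simp [sg, mem_map_equiv]
  · apply prod_congr rfl
    intro i hi
    have h1 : i ≠ a := fun h => haR (h ▸ hi)
    have h2 : i ≠ b := fun h => hbR (h ▸ hi)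
    simp [sg, mem_map_equiv, Equiv.swap_apply_of_ne_of_ne h1 h2]

lemma sum_sg (k : ℕ) (X B : Finset α) (hX : X.card = 2*k) (hB : B ∈ powersetCard k X) :
    ∑ i ∈ X, sg B i = 0 := by
  rw [mem_powersetCard] at hB
  unfold sg
  rw [sum_ite, filter_mem_eq_inter, inter_eq_right.2 hB.1]
  have : (X.filter (fun i => i ∉ B)).card = k := by
    rw [← sdiff_eq_filter, card_sdiff_of_subset hB.1]; omega
  simp [this, hB.2]

lemma kap_rec (k : ℕ) (X R : Finset α) (hX : X.card = 2*k) (hR : R ⊆ X) :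
    ∑ l ∈ R, kap k X (R.erase l) + ∑ l ∈ X \ R, kap k X (insert l R) = 0 := by
  unfold kap
  rw [sum_comm, sum_comm (s := X \ R), ← sum_add_distrib]
  apply sum_eq_zero
  intro B hB
  have h0 : chi R B * ∑ i ∈ X, sg B i = 0 := by rw [sum_sg k X B hX hB, mul_zero]
  rw [← h0, ← sum_sdiff hR, mul_add, mul_sum, mul_sum, add_comm]
  congr 1
  · apply sum_congr rfl
    intro l hl
    have := (mem_sdiff.1 hl).2
    unfold chi
    rw [prod_insert this, mul_comm]
  · apply sum_congr rfl
    intro l hl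
    unfold chi
    rw [← mul_prod_erase R _ hl]
    have := sg_sq B l
    linear_combination (-∏ x ∈ R.erase l, sg B x) * this

lemma kap_eq (k : ℕ) (X : Finset α) (hX : X.card = 2*k) (s : ℕ) :
    ∀ S ⊆ X, S.card = s → kap k X S = ((2*k).choose k : ℝ) * mm k s := by
  have key : ∀ (R : Finset α) (a : α), R ⊆ X → a ∈ X → a ∉ R →
      ∑ l ∈ R, kap k X (R.erase l) + (2*(k:ℝ) - R.card) * kap k X (insert a R) = 0 := by
    intro R a hR ha haR
    rw [← kap_rec k X R hX hR]
    congr 1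
    have hc : ((X \ R).card : ℝ) = 2*(k:ℝ) - R.card := by
      rw [cast_card_sdiff hR, hX]; push_cast; ring
    rw [sum_congr rfl (fun l hl => kap_swap k X R l a (mem_sdiff.1 hl).1 ha (mem_sdiff.1 hl).2 haR)]
    rw [sum_const, nsmul_eq_mul, hc]
  have hcard : ∀ (R : Finset α) (a : α), R ⊆ X → a ∈ X → a ∉ R → R.card + 1 ≤ 2*k := by
    intro R a hR ha haR
    rw [← hX, ← card_insert_of_notMem haR]
    exact card_le_card (insert_subset ha hR)
  induction s using Nat.strong_induction_on with
  | _ s ih =>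
    intro S hS hs
    match s, ih, hs with
    | 0, _, hs =>
      rw [card_eq_zero.1 hs]
      simp [kap, chi, mm, hX]
    | 1, _, hs =>
      obtain ⟨a, rfl⟩ := card_eq_one.1 hs
      have ha : a ∈ X := by simpa using hS
      have := key ∅ a (by simp) ha (by simp)
      have h2 := hcard ∅ a (by simp) ha (by simp)
      have hk : (k:ℝ) ≠ 0 := by
        have : k ≠ 0 := by rintro rfl; simp at h2
        exact_mod_cast this
      simp only [sum_empty, card_empty, zero_add, Nat.cast_zero, sub_zero, insert_empty] at this
      have h3 : kap k X {a} = 0 := by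
        rcases mul_eq_zero.1 this with h | h
        · exact absurd h (by positivity)
        · exact h
      rw [h3, mm, mul_zero]
    | (s+2), ih, hs =>
      obtain ⟨a, haS⟩ : S.Nonempty := by rw [← card_pos]; omega
      have hR : S.erase a ⊆ X := (erase_subset a S).trans hS
      have hRc : (S.erase a).card = s+1 := by rw [card_erase_of_mem haS, hs]; rfl
      have h1 := key (S.erase a) a hR (hS haS) (notMem_erase a S)
      have h2 := hcard (S.erase a) a hR (hS haS) (notMem_erase a S)
      rw [insert_erase haS] at h1
      rw [sum_congr rfl (fun l hl => ih s (by omega) ((S.erase a).erase l) ((erase_subset _ _).trans hR)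
        (by rw [card_erase_of_mem hl, hRc]; rfl)), sum_const, hRc, nsmul_eq_mul] at h1
      have hne : 2*(k:ℝ) - s - 1 ≠ 0 := by
        rw [hRc] at h2
        have : ((s+1+1:ℕ):ℝ) ≤ ((2*k:ℕ):ℝ) := by exact_mod_cast h2
        push_cast at this
        linarith
      push_cast at h1
      rw [mm]
      field_simp
      linear_combination h1

variable [Fintype α]

lemma chi_split (S A B : Finset α) :
    chi S B = chi (S ∩ A) (B ∩ A) * chi (S \ A) (B \ A) := by
  unfold chi
  have hd : Disjoint (S ∩ A) (S \ A) := by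
    rw [disjoint_left]; intro x h1 h2; simp at h1 h2; tauto
  have : S = (S ∩ A) ∪ (S \ A) := by ext x; simp; tauto
  conv_lhs => rw [this, prod_union hd]
  congr 1
  · apply prod_congr rfl; intro i hi; simp at hi; simp [sg, hi]
  · apply prod_congr rfl; intro i hi; simp at hi; simp [sg, hi]

/-- sums over neighbours factor -/
lemma sum_nbr (k : ℕ) (A : Finset α) (p q : Finset α → ℝ) :
    ∑ B ∈ univ.filter (fun B : Finset α => B.card = 2*k ∧ (A ∩ B).card = k), p (B ∩ A) * q (B \ A)
      = (∑ B ∈ powersetCard k A, p B) * ∑ B ∈ powersetCard k Aᶜ, q B := by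
  rw [sum_mul_sum, ← sum_product']
  refine sum_bij' (fun B _ => (B ∩ A, B \ A)) (fun P _ => P.1 ∪ P.2) ?_ ?_ ?_ ?_ ?_
  · intro B hB
    simp only [mem_filter, mem_univ, true_and] at hB
    simp only [mem_product, mem_powersetCard]
    have h3 : (B ∩ A).card = k := by rw [inter_comm]; exact hB.2
    refine ⟨⟨inter_subset_right, h3⟩, ?_, ?_⟩
    · intro x hx; simp at hx ⊢; exact hx.2
    · have := card_inter_add_card_sdiff B A
      omega
  · rintro ⟨P, Q⟩ hP
    simp only [mem_product, mem_powersetCard] at hP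
    obtain ⟨⟨hP, hPc⟩, hQ, hQc⟩ := hP
    have hQ' : Disjoint A Q := by
      rw [disjoint_left]; intro x h1 h2; have := hQ h2; simp at this; exact this h1
    have hd : Disjoint P Q := disjoint_of_subset_left hP hQ'
    simp only [mem_filter, mem_univ, true_and]
    rw [card_union_of_disjoint hd, inter_union_distrib_left, inter_eq_right.2 hP,
      disjoint_iff_inter_eq_empty.1 hQ', union_empty]
    omega
  · intro B hB; ext x; simp; tauto
  · rintro ⟨P, Q⟩ hP
    simp only [mem_product, mem_powersetCard] at hP
    obtain ⟨⟨hP, hPc⟩, hQ, hQc⟩ := hP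
    have hQ' : ∀ x ∈ Q, x ∉ A := by intro x h2; have := hQ h2; simpa using this
    ext x
    · simp only [mem_inter, mem_union]
      have := @hP x; have := hQ' x; tauto
    · simp only [mem_sdiff, mem_union]
      have := @hP x; have := hQ' x; tauto
  · intro B hB; rfl

lemma sum_chi_nbr (k : ℕ) (hα : Fintype.card α = 4*k) (A S : Finset α) (hA : A.card = 2*k) :
    ∑ B ∈ univ.filter (fun B : Finset α => B.card = 2*k ∧ (A ∩ B).card = k), chi S B
      = ((2*k).choose k : ℝ)^2 * (mm k (S ∩ A).card * mm k (S.card - (S ∩ A).card)) := by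
  rw [sum_congr rfl (fun B _ => chi_split S A B)]
  rw [sum_nbr k A (chi (S ∩ A)) (chi (S \ A))]
  have h1 := kap_eq k A hA _ (S ∩ A) inter_subset_right rfl
  have h2 := kap_eq k Aᶜ (by rw [card_compl, hα, hA]; omega) _ (S \ A)
    (by intro x hx; simp at hx ⊢; exact hx.2) rfl
  have h3 : (S \ A).card = S.card - (S ∩ A).card := by
    have := card_inter_add_card_sdiff S A
    omega
  unfold kap at h1 h2
  rw [h1, h2, h3]; ring

lemma card_nbr (k : ℕ) (hα : Fintype.card α = 4*k) (A : Finset α) (hA : A.card = 2*k) :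
    ((univ.filter (fun B : Finset α => B.card = 2*k ∧ (A ∩ B).card = k)).card : ℝ)
      = ((2*k).choose k : ℝ)^2 := by
  have := sum_chi_nbr k hα A ∅ hA
  simpa [chi, mm] using this

def Harm (j : ℕ) (g : Finset α → ℝ) : Prop :=
  ∀ R : Finset α, R.card + 1 = j → ∑ l ∈ Rᶜ, g (insert l R) = 0

/-- sum of `g` over `j`-sets meeting `A` in `r` elements -/
def GG (j : ℕ) (g : Finset α → ℝ) (A : Finset α) (r : ℕ) : ℝ :=
  ∑ S ∈ powersetCard j univ, if (S ∩ A).card = r then g S else 0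

lemma GG_rec (j : ℕ) (g : Finset α → ℝ) (hg : Harm j g) (A : Finset α) (r : ℕ) (hr : r < j) :
    ((r:ℝ)+1) * GG j g A (r+1) + ((j:ℝ)-r) * GG j g A r = 0 := by
  have h0 : ∑ R ∈ powersetCard (j-1) univ, ∑ l ∈ Rᶜ,
      (if (R ∩ A).card = r then g (insert l R) else 0) = 0 := by
    apply sum_eq_zero
    intro R hR
    have hR : R.card = j-1 := (mem_powersetCard.1 hR).2
    split_ifs
    · exact hg R (by omega)
    · simp
  have h1 : ∑ R ∈ powersetCard (j-1) univ, ∑ l ∈ Rᶜ,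
      (if (R ∩ A).card = r then g (insert l R) else 0) =
      ∑ S ∈ powersetCard j univ, ∑ l ∈ S, (if (S.erase l ∩ A).card = r then g S else 0) := by
    rw [sum_sigma', sum_sigma']
    refine sum_bij' (fun p _ => ⟨insert p.2 p.1, p.2⟩) (fun p _ => ⟨p.1.erase p.2, p.2⟩) ?_ ?_ ?_ ?_ ?_
    · rintro ⟨R, l⟩ h
      simp only [mem_sigma, mem_powersetCard, subset_univ, true_and, mem_compl] at h
      simp only [mem_sigma, mem_powersetCard, subset_univ, true_and, mem_insert_self, and_true]
      rw [card_insert_of_notMem h.2]; omega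
    · rintro ⟨S, l⟩ h
      simp only [mem_sigma, mem_powersetCard, subset_univ, true_and] at h
      simp only [mem_sigma, mem_powersetCard, subset_univ, true_and, mem_compl, notMem_erase, not_false_iff, and_true]
      rw [card_erase_of_mem h.2]; omega
    · rintro ⟨R, l⟩ h
      simp only [mem_sigma, mem_powersetCard, subset_univ, true_and, mem_compl] at h
      simp [erase_insert h.2]
    · rintro ⟨S, l⟩ h
      simp only [mem_sigma, mem_powersetCard, subset_univ, true_and] at h
      simp [insert_erase h.2]
    · rintro ⟨R, l⟩ h
      simp only [mem_sigma, mem_powersetCard, subset_univ, true_and, mem_compl] at h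
      simp [erase_insert h.2]
  rw [← h0, h1]
  unfold GG
  rw [mul_sum, mul_sum, ← sum_add_distrib]
  apply sum_congr rfl
  intro S hS
  have hS : S.card = j := (mem_powersetCard.1 hS).2
  have hc : ((S \ A).card : ℝ) = j - (S ∩ A).card := by
    have := card_inter_add_card_sdiff S A
    rw [← hS, ← this]; push_cast; ring
  have hsplit : ∑ l ∈ S, (if (S.erase l ∩ A).card = r then g S else 0)
    = ∑ l ∈ S ∩ A, (if (S ∩ A).card = r+1 then g S else 0) +
      ∑ l ∈ S \ A, (if (S ∩ A).card = r then g S else 0) := by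
    have hd : Disjoint (S ∩ A) (S \ A) := by
      rw [disjoint_left]; intro x h1 h2; simp at h1 h2; tauto
    have : S = (S ∩ A) ∪ (S \ A) := by ext x; simp; tauto
    conv_lhs => arg 1; rw [this]
    rw [sum_union hd]
    congr 1
    · apply sum_congr rfl
      intro l hl
      have : S.erase l ∩ A = (S ∩ A).erase l := by ext x; simp
      rw [this, card_erase_of_mem hl]
      have : 0 < (S ∩ A).card := card_pos.2 ⟨l, hl⟩
      congr 1
      apply propext; omega
    · apply sum_congr rfl
      intro l hl
      have hl2 := (mem_sdiff.1 hl).2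
      have : S.erase l ∩ A = S ∩ A := by
        ext x; simp only [mem_inter, mem_erase]
        constructor
        · tauto
        · rintro ⟨h1, h2⟩
          exact ⟨⟨fun h => hl2 (h ▸ h2), h1⟩, h2⟩
      rw [this]
  rw [hsplit, sum_const, sum_const, nsmul_eq_mul, nsmul_eq_mul, hc]
  congr 1
  · split_ifs with h
    · rw [h]; push_cast; ring
    · ring
  · split_ifs with h
    · rw [h]
    · ring

lemma GG_eq (j : ℕ) (g : Finset α → ℝ) (hg : Harm j g) (A : Finset α) (i : ℕ) (hi : i ≤ j) :
    GG j g A (j-i) = (-1)^i * (j.choose (j-i)) * GG j g A j := by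
  induction i with
  | zero => simp
  | succ i ih =>
    have ih := ih (by omega)
    obtain ⟨r, hr⟩ : ∃ r, j = r + (i+1) := ⟨j-(i+1), by omega⟩
    have e1 : j - (i+1) = r := by omega
    have e2 : j - i = r+1 := by omega
    rw [e1]
    rw [e2] at ih
    have h := GG_rec j g hg A r (by omega)
    have hc : ((j.choose (r+1) : ℕ):ℝ) * (r+1) = j.choose r * (i+1) := by
      have := Nat.choose_succ_right_eq j r
      have h2 : j - r = i+1 := by omega
      rw [h2] at this
      exact_mod_cast this
    have hj : (j:ℝ) - r = i+1 := by rw [hr]; push_cast; ring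
    rw [hj] at h
    have hne : (i:ℝ)+1 ≠ 0 := by positivity
    apply mul_left_cancel₀ hne
    rw [pow_succ]
    linear_combination h - ((r:ℝ)+1) * ih - (-1)^i * GG j g A j * hc

lemma GG_weight (j : ℕ) (g : Finset α → ℝ) (hg : Harm j g) (A : Finset α) (c : ℕ → ℝ) :
    ∑ S ∈ powersetCard j univ, g S * c (S ∩ A).card
      = (∑ r ∈ range (j+1), (-1:ℝ)^(j-r) * (j.choose r) * c r) * GG j g A j := by
  have h1 : ∑ S ∈ powersetCard j univ, g S * c (S ∩ A).card
      = ∑ r ∈ range (j+1), c r * GG j g A r := by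
    unfold GG
    simp_rw [mul_sum]
    rw [sum_comm]
    apply sum_congr rfl
    intro S hS
    have hS : S.card = j := (mem_powersetCard.1 hS).2
    simp_rw [mul_ite, mul_zero]
    rw [sum_ite_eq, if_pos, mul_comm]
    have := card_le_card (inter_subset_left : S ∩ A ⊆ S)
    simp; omega
  rw [h1, sum_mul]
  apply sum_congr rfl
  intro r hr
  have hr : r ≤ j := by simpa [Nat.lt_succ_iff] using hr
  have := GG_eq j g hg A (j-r) (by omega)
  have e : j - (j-r) = r := by omega
  rw [e] at this
  rw [this]; ring

lemma chi_eq (S B : Finset α) : chi S B = (-1)^(S.card - (S ∩ B).card) := by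
  unfold chi sg
  rw [prod_ite, prod_const_one, one_mul, prod_const, ← sdiff_eq_filter]
  congr 1
  have := card_inter_add_card_sdiff S B
  omega

lemma GG_chi (j : ℕ) (g : Finset α → ℝ) (hg : Harm j g) (A : Finset α) :
    GG j g A j = (∑ S ∈ powersetCard j univ, g S * chi S A) / 2^j := by
  have h := GG_weight j g hg A (fun r => (-1)^(j-r))
  have h2 : ∑ r ∈ range (j+1), (-1:ℝ)^(j-r) * (j.choose r) * (-1)^(j-r) = 2^j := by
    rw [← (by exact_mod_cast Nat.sum_range_choose j : ∑ r ∈ range (j+1), ((j.choose r : ℕ):ℝ) = 2^j)]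
    apply sum_congr rfl
    intro r _
    have : (-1:ℝ)^(j-r) * (-1)^(j-r) = 1 := by rw [← mul_pow]; simp
    linear_combination (j.choose r : ℝ) * this
  rw [h2] at h
  rw [eq_div_iff (by positivity), mul_comm, ← h]
  apply sum_congr rfl
  intro S hS
  rw [chi_eq, (mem_powersetCard.1 hS).2]

lemma GG_eigen (k : ℕ) (hα : Fintype.card α = 4*k) (j : ℕ) (g : Finset α → ℝ) (hg : Harm j g)
    (A : Finset α) (hA : A.card = 2*k) :
    ∑ B ∈ univ.filter (fun B : Finset α => B.card = 2*k ∧ (A ∩ B).card = k), GG j g B j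
      = ((2*k).choose k : ℝ)^2 * lam k j * GG j g A j := by
  simp_rw [GG_chi j g hg, ← sum_div]
  rw [sum_comm]
  simp_rw [← mul_sum]
  rw [← GG_chi j g hg]
  have : ∑ S ∈ powersetCard j univ, g S * 
      ∑ B ∈ univ.filter (fun B : Finset α => B.card = 2*k ∧ (A ∩ B).card = k), chi S B
      = ∑ S ∈ powersetCard j univ, g S * 
       (fun r => ((2*k).choose k : ℝ)^2 * (mm k r * mm k (j - r))) (S ∩ A).card := by
    apply sum_congr rfl
    intro S hS
    rw [sum_chi_nbr k hα A S hA, (mem_powersetCard.1 hS).2]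
  rw [this, GG_weight j g hg A (fun r => ((2*k).choose k : ℝ)^2 * (mm k r * mm k (j - r)))]
  unfold lam
  rw [mul_div_assoc', div_mul_eq_mul_div, mul_sum]
  congr 2
  apply sum_congr rfl
  intros; ring

end comb
section spec
variable {α : Type*} [DecidableEq α] [Fintype α]

/-- adjacency entries -/
def tt (k : ℕ) (A B : Finset α) : ℝ := if (A ∩ B).card = k then 1 else 0

lemma tt_comm (k : ℕ) (A B : Finset α) : tt k A B = tt k B A := by
  unfold tt; rw [inter_comm]

lemma sum_tt (k : ℕ) (A : Finset α) (h : Finset α → ℝ) :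
    ∑ B : {B : Finset α // B.card = 2*k}, tt k A B.1 * h B.1 =
    ∑ B ∈ univ.filter (fun B : Finset α => B.card = 2*k ∧ (A ∩ B).card = k), h B := by
  rw [← filter_filter, sum_filter,
    ← sum_subtype (univ.filter (fun B : Finset α => B.card = 2*k)) (by simp)
      (fun B => tt k A B * h B)]
  apply sum_congr rfl
  intro B _
  simp [tt]

lemma card_idx (k : ℕ) (hα : Fintype.card α = 4*k) :
    (Fintype.card {B : Finset α // B.card = 2*k} : ℝ) = ((4*k).choose (2*k) : ℝ) := by
  rw [Fintype.card_finset_len, hα]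

lemma eig_nonneg (k : ℕ) (hk : 1 ≤ k) (hα : Fintype.card α = 4*k) (d e c : ℝ)
    (hd : d = ((2*k).choose k : ℝ)^2) (he : e = 1/(4*(k:ℝ)-2))
    (hc : c * ((4*k).choose (2*k) : ℝ) = d * (1 + e))
    (f : {B : Finset α // B.card = 2*k} → ℝ) (hf : f ≠ 0) (μ : ℝ)
    (h : ∀ A, ∑ B, tt k A.1 B.1 * f B + d * e * f A - c * ∑ B, f B = μ * f A) : 0 ≤ μ := by
  by_contra hμ
  push Not at hμ
  have hrow : ∀ A : {B : Finset α // B.card = 2*k},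
      ∑ B : {B : Finset α // B.card = 2*k}, tt k A.1 B.1 = d := by
    intro A
    have := sum_tt k A.1 (fun _ => 1)
    simp only [mul_one] at this
    rw [this, sum_const, nsmul_eq_mul, mul_one, card_nbr k hα A.1 A.2, hd]
  have hswap : ∀ p q : {B : Finset α // B.card = 2*k} → ℝ,
      ∑ A, q A * ∑ B, tt k A.1 B.1 * p B = ∑ B, p B * ∑ A, tt k B.1 A.1 * q A := by
    intro p q
    simp_rw [mul_sum]
    rw [sum_comm]
    apply sum_congr rfl; intro B _
    apply sum_congr rfl; intro A _
    rw [tt_comm k A.1 B.1]; ring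
  have hsum0 : ∑ B, f B = 0 := by
    have h1 := sum_congr (rfl : (univ : Finset {B : Finset α // B.card = 2*k}) = univ) (fun A _ => h A)
    rw [sum_sub_distrib, sum_add_distrib, ← mul_sum, ← mul_sum, sum_const, nsmul_eq_mul,
      card_univ, card_idx k hα] at h1
    have h2 := hswap f (fun _ => 1)
    simp only [one_mul, mul_one] at h2
    rw [h2] at h1
    simp_rw [hrow] at h1
    rw [← sum_mul] at h1
    have h3 : μ * ∑ B, f B = 0 := by
      rw [mul_sum, ← h1]; linear_combination (-∑ B, f B) * hc
    rcases mul_eq_zero.1 h3 with h | h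
    · exact absurd h hμ.ne
    · exact h
  set g : Finset α → ℝ := fun S => ∑ A : {B : Finset α // B.card = 2*k}, if S ⊆ A.1 then f A else 0 with hg
  have hex : ∃ j, ∃ S : Finset α, S.card = j ∧ g S ≠ 0 := by
    obtain ⟨A, hA⟩ := Function.ne_iff.1 hf
    refine ⟨_, A.1, rfl, ?_⟩
    have : g A.1 = f A := by
      simp only [hg]
      rw [sum_eq_single A]
      · simp
      · intro B _ hBA
        rw [if_neg]
        intro hs
        exact hBA (Subtype.ext (eq_of_subset_of_card_le hs (by rw [A.2, B.2])).symm)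
      · simp
    rw [this]; exact hA
  classical
  obtain ⟨S₀, hS₀, hgS₀⟩ := Nat.find_spec hex
  have hmin : ∀ S : Finset α, S.card < Nat.find hex → g S = 0 := by
    intro S hS
    by_contra hne
    exact Nat.find_min hex hS ⟨S, rfl, hne⟩
  set j := Nat.find hex with hj
  have hj1 : 1 ≤ j := by
    by_contra h0
    have : S₀ = ∅ := card_eq_zero.1 (by omega)
    apply hgS₀
    rw [this]
    simpa [hg] using hsum0
  have hj2 : j ≤ 2*k := by
    by_contra h0
    apply hgS₀
    simp only [hg]
    apply sum_eq_zero
    intro A _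
    rw [if_neg]
    intro hs
    have := card_le_card hs
    have := A.2
    omega
  have hH : Harm j g := by
    intro R hR
    have h0 := hmin R (by omega)
    have : ∑ l ∈ Rᶜ, g (insert l R) = (2*(k:ℝ) - R.card) * g R := by
      simp only [hg]
      rw [sum_comm, mul_sum]
      apply sum_congr rfl
      intro A _
      by_cases hRA : R ⊆ A.1
      · simp only [insert_subset_iff, hRA, and_true, if_true]
        rw [← sum_filter, sum_const, nsmul_eq_mul]
        have : Rᶜ.filter (fun x => x ∈ A.1) = A.1 \ R := by ext x; simp; tauto
        rw [this, cast_card_sdiff hRA, A.2]; push_cast; ring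
      · simp [insert_subset_iff, hRA]
    rw [this, h0, mul_zero]
  set f' : {B : Finset α // B.card = 2*k} → ℝ := fun A => GG j g A.1 j with hf'
  have hT : ∀ A : {B : Finset α // B.card = 2*k}, ∑ B, tt k A.1 B.1 * f' B = d * lam k j * f' A := by
    intro A
    have := sum_tt k A.1 (fun B => GG j g B j)
    simp only [hf']
    rw [this, GG_eigen k hα j g hH A.1 A.2, hd]
  have hip : ∑ A, f A * f' A = ∑ S ∈ powersetCard j univ, g S ^ 2 := by
    simp only [hf', GG]
    simp_rw [mul_sum]
    rw [sum_comm]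
    apply sum_congr rfl
    intro S hS
    have hS : S.card = j := (mem_powersetCard.1 hS).2
    rw [sq]
    conv_rhs => rw [hg]
    simp only
    rw [sum_mul]
    apply sum_congr rfl
    intro A _
    have : (S ∩ A.1).card = j ↔ S ⊆ A.1 := by
      rw [← hS]
      constructor
      · intro h
        exact inter_eq_left.1 (eq_of_subset_of_card_le inter_subset_left h.ge)
      · intro h; rw [inter_eq_left.2 h]
    simp only [this]
    split_ifs <;> simp [hg]
  have hpos : 0 < ∑ A, f A * f' A := by
    rw [hip]
    apply sum_pos' (fun _ _ => sq_nonneg _)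
    exact ⟨S₀, by simp [hS₀], by positivity⟩
  have h1 := hswap f f'
  simp_rw [hT] at h1
  have h2 : ∀ A, ∑ B, tt k A.1 B.1 * f B = (μ - d*e) * f A := by
    intro A
    have := h A
    rw [hsum0] at this
    linarith
  simp_rw [h2] at h1
  have h3 : (μ - d*e) * ∑ A, f A * f' A = d * lam k j * ∑ A, f A * f' A := by
    rw [mul_sum, mul_sum]
    refine Eq.trans (sum_congr rfl ?_) (h1.trans (sum_congr rfl ?_))
    · intros; ring
    · intros; ring
  have h4 := mul_right_cancel₀ hpos.ne' h3
  have h5 := lam_bound k j hj1 hj2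
  rw [← he] at h5
  have hd0 : 0 ≤ d := by rw [hd]; positivity
  have : 0 ≤ d * (lam k j + e) := mul_nonneg hd0 (by linarith)
  linarith

lemma quad_nonneg (k : ℕ) (hk : 1 ≤ k) (hα : Fintype.card α = 4*k) (d e c : ℝ)
    (hd : d = ((2*k).choose k : ℝ)^2) (he : e = 1/(4*(k:ℝ)-2))
    (hc : c * ((4*k).choose (2*k) : ℝ) = d * (1 + e))
    (f : {B : Finset α // B.card = 2*k} → ℝ) :
    0 ≤ ∑ A, f A * (∑ B, tt k A.1 B.1 * f B + d * e * f A - c * ∑ B, f B) := by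
  let M : Matrix {B : Finset α // B.card = 2*k} {B : Finset α // B.card = 2*k} ℝ :=
    fun A B => tt k A.1 B.1 + (if A = B then d * e else 0) - c
  have hmul : ∀ (p : {B : Finset α // B.card = 2*k} → ℝ) A, (M.mulVec p) A =
      ∑ B, tt k A.1 B.1 * p B + d * e * p A - c * ∑ B, p B := by
    intro p A
    simp only [Matrix.mulVec, dotProduct, M]
    simp_rw [sub_mul, add_mul]
    rw [sum_sub_distrib, sum_add_distrib, ← mul_sum]
    simp
  have hM : M.IsHermitian := by
    ext A B
    rw [Matrix.conjTranspose_apply, star_trivial]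
    change tt k B.1 A.1 + (if B = A then d * e else 0) - c
      = tt k A.1 B.1 + (if A = B then d * e else 0) - c
    rw [tt_comm]
    by_cases h : A = B
    · simp [h]
    · simp [h, Ne.symm h]
  have hP : M.PosSemidef := by
    rw [hM.posSemidef_iff_eigenvalues_nonneg]
    intro i
    have hv := hM.mulVec_eigenvectorBasis i
    refine eig_nonneg k hk hα d e c hd he hc (⇑(hM.eigenvectorBasis i)) ?_ _ ?_
    · intro h0
      have hn := hM.eigenvectorBasis.orthonormal.ne_zero i
      apply hn
      ext x
      exact congrFun h0 x
    · intro A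
      rw [← hmul, hv]; rfl
  have := hP.dotProduct_mulVec_nonneg f
  simp only [dotProduct, hmul, star_trivial] at this
  exact this

theorem base_case (k : ℕ) (hk : 1 ≤ k) (hα : Fintype.card α = 4*k)
    (F : Finset (Finset α))
    (hcard : ∀ A ∈ F, A.card = 2 * k)
    (hfree : ∀ A ∈ F, ∀ B ∈ F, ∀ C ∈ F, A ≠ B → A ≠ C → B ≠ C →
      symmDiff (symmDiff A B) C ≠ ∅) :
    (4 * (k:ℝ) - 1) * F.card ≤ 2 * k * ((4*k).choose (2 * k) : ℝ) := by
  have hkR : (1:ℝ) ≤ k := by exact_mod_cast hk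
  rcases F.eq_empty_or_nonempty with rfl | hne
  · simp; positivity
  have hFpos : (0:ℝ) < F.card := by exact_mod_cast card_pos.2 hne
  obtain ⟨d, hd⟩ : ∃ d : ℝ, d = ((2*k).choose k : ℝ)^2 := ⟨_, rfl⟩
  obtain ⟨e, he⟩ : ∃ e : ℝ, e = 1/(4*(k:ℝ)-2) := ⟨_, rfl⟩
  obtain ⟨N, hN⟩ : ∃ N : ℝ, N = ((4*k).choose (2*k) : ℝ) := ⟨_, rfl⟩
  have hNpos : 0 < N := by rw [hN]; exact_mod_cast Nat.choose_pos (by omega)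
  have hdpos : 0 < d := by
    rw [hd]; have : 0 < (2*k).choose k := Nat.choose_pos (by omega)
    positivity
  have hq := quad_nonneg (α := α) k hk hα d e (d*(1+e)/N) hd he
    (by rw [← hN]; field_simp) (fun A => if A.1 ∈ F then 1 else 0)
  have hsumF : ∀ h : Finset α → ℝ, ∑ A : {B : Finset α // B.card = 2*k},
      (if A.1 ∈ F then 1 else 0) * h A.1 = ∑ A ∈ F, h A := by
    intro h
    rw [← sum_subtype (univ.filter (fun B : Finset α => B.card = 2*k)) (by simp)
      (fun A => (if A ∈ F then 1 else 0) * h A)]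
    simp_rw [ite_mul, one_mul, zero_mul]
    rw [← sum_filter]
    apply sum_congr _ (fun _ _ => rfl)
    ext A
    simp only [mem_filter, mem_univ, true_and]
    exact ⟨fun h => h.2, fun h => ⟨hcard A h, h⟩⟩
  have hcnt : ∑ B : {B : Finset α // B.card = 2*k}, (if B.1 ∈ F then (1:ℝ) else 0) = F.card := by
    have := hsumF (fun _ => 1)
    simpa using this
  -- at most half of the neighbours lie in F
  have hhalf : ∀ A ∈ F, ∑ B : {B : Finset α // B.card = 2*k},
      tt k A B.1 * (if B.1 ∈ F then (1:ℝ) else 0) ≤ d/2 := by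
    intro A hA
    rw [sum_tt k A (fun B => if B ∈ F then (1:ℝ) else 0)]
    have hAc := hcard A hA
    set Nb := univ.filter (fun B : Finset α => B.card = 2*k ∧ (A ∩ B).card = k) with hNb
    have hinv : ∀ B ∈ Nb, symmDiff A B ∈ Nb := by
      intro B hB
      simp only [hNb, mem_filter, mem_univ, true_and] at hB ⊢
      have h1 := card_inter_add_card_sdiff A B
      have h2 := card_inter_add_card_sdiff B A
      rw [inter_comm] at h2
      have h3 : A ∩ symmDiff A B = A \ B := by
        ext x; simp [mem_symmDiff]; tauto
      have h4 : (symmDiff A B).card = (A \ B).card + (B \ A).card := by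
        rw [symmDiff_def, sup_eq_union, card_union_of_disjoint]
        exact disjoint_sdiff_sdiff
      rw [h3, h4]
      omega
    have hself : ∀ B, symmDiff A (symmDiff A B) = B := fun B => symmDiff_symmDiff_cancel_left A B
    have hre : ∑ B ∈ Nb, (if B ∈ F then (1:ℝ) else 0) = ∑ B ∈ Nb, (if symmDiff A B ∈ F then (1:ℝ) else 0) := by
      refine sum_bij' (fun B _ => symmDiff A B) (fun B _ => symmDiff A B) hinv hinv
        (fun B _ => hself B) (fun B _ => hself B) ?_
      intro B _
      rw [hself]
    have hle : ∑ B ∈ Nb, ((if B ∈ F then (1:ℝ) else 0) + (if symmDiff A B ∈ F then (1:ℝ) else 0)) ≤ ∑ B ∈ Nb, 1 := by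
      apply sum_le_sum
      intro B hB
      by_cases h1 : B ∈ F
      · by_cases h2 : symmDiff A B ∈ F
        · exfalso
          have hB2 := hinv B hB
          simp only [hNb, mem_filter, mem_univ, true_and] at hB hB2
          refine hfree A hA B h1 _ h2 ?_ ?_ ?_ (symmDiff_self _)
          · rintro rfl
            rw [inter_self] at hB; omega
          · intro hh
            rw [← hh, inter_self] at hB2; omega
          · intro hh
            have : A = ⊥ := symmDiff_eq_right.1 hh.symm
            rw [this] at hAc
            simp at hAc; omega
        · simp [h1, h2]
      · simp only [h1, if_false, zero_add]
        split_ifs <;> norm_num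
    rw [sum_add_distrib, ← hre, sum_const, nsmul_eq_mul, mul_one, card_nbr k hα A hAc, ← hd] at hle
    linarith
  rw [hcnt] at hq
  have e1 : ∑ A : {B : Finset α // B.card = 2*k}, (if A.1 ∈ F then (1:ℝ) else 0) *
      (∑ B : {B : Finset α // B.card = 2*k}, tt k A.1 B.1 * (if B.1 ∈ F then (1:ℝ) else 0) +
        d * e * (if A.1 ∈ F then (1:ℝ) else 0) - d*(1+e)/N * F.card) =
      ∑ A ∈ F, (∑ B : {B : Finset α // B.card = 2*k}, tt k A B.1 * (if B.1 ∈ F then (1:ℝ) else 0) +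
        d * e * (if A ∈ F then (1:ℝ) else 0) - d*(1+e)/N * F.card) :=
    hsumF (fun A => ∑ B : {B : Finset α // B.card = 2*k}, tt k A B.1 * (if B.1 ∈ F then (1:ℝ) else 0) +
        d * e * (if A ∈ F then (1:ℝ) else 0) - d*(1+e)/N * F.card)
  rw [e1] at hq
  have hub : ∑ A ∈ F, (∑ B : {B : Finset α // B.card = 2*k}, tt k A B.1 * (if B.1 ∈ F then (1:ℝ) else 0) +
        d * e * (if A ∈ F then (1:ℝ) else 0) - d*(1+e)/N * F.card) ≤
      ∑ A ∈ F, (d/2 + d*e - d*(1+e)/N * F.card) := by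
    apply sum_le_sum
    intro A hA
    have := hhalf A hA
    rw [if_pos hA]
    linarith
  rw [sum_const, nsmul_eq_mul] at hub
  have h0 : 0 ≤ d/2 + d*e - d*(1+e)/N * F.card := by
    have := hq.trans hub
    exact nonneg_of_mul_nonneg_right this hFpos
  have h1 : d/2 + d*e - d*(1+e)/N * F.card = d/N * ((1/2+e)*N - (1+e)*F.card) := by
    field_simp
  rw [h1] at h0
  have h2 : 0 ≤ (1/2+e)*N - (1+e)*F.card := nonneg_of_mul_nonneg_right h0 (by positivity)
  have hpos : 0 < 4*(k:ℝ)-2 := by linarith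
  have he2 : e * (4*(k:ℝ)-2) = 1 := by rw [he]; field_simp
  rw [← hN]
  have h3 : 0 ≤ ((1/2+e)*N - (1+e)*F.card) * (4*(k:ℝ)-2) := mul_nonneg h2 hpos.le
  have h4 : ((1/2+e)*N - (1+e)*F.card) * (4*(k:ℝ)-2) = 2*k*N - (4*k-1)*F.card := by
    linear_combination (N - F.card) * he2
  linarith

end spec

lemma local_bound (k n : ℕ) (hk : 1 ≤ k) (F : Finset (Finset (Fin n)))
    (hcard : ∀ A ∈ F, A.card = 2 * k)
    (hfree : ∀ A ∈ F, ∀ B ∈ F, ∀ C ∈ F, A ≠ B → A ≠ C → B ≠ C →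
      symmDiff (symmDiff A B) C ≠ ∅) (Y : Finset (Fin n)) (hY : Y.card = 4*k) :
    (4 * (k:ℝ) - 1) * (F.filter (fun A => A ⊆ Y)).card ≤ 2 * k * ((4*k).choose (2 * k) : ℝ) := by
  let m : Finset Y → Finset (Fin n) := fun B => B.image Subtype.val
  have hinj : Function.Injective m := image_injective Subtype.val_injective
  have hmc : ∀ B, (m B).card = B.card := fun B => card_image_of_injective _ Subtype.val_injective
  have hb := base_case (α := Y) k hk (by simpa using hY) (univ.filter (fun B => m B ∈ F))
    (by
      intro B hB
      rw [← hmc]; exact hcard _ (by simpa using hB))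
    (by
      intro A hA B hB C hC hAB hAC hBC h0
      refine hfree (m A) (by simpa using hA) (m B) (by simpa using hB) (m C) (by simpa using hC)
        (hinj.ne hAB) (hinj.ne hAC) (hinj.ne hBC) ?_
      simp only [m]
      rw [← image_symmDiff _ _ Subtype.val_injective, ← image_symmDiff _ _ Subtype.val_injective, h0,
        image_empty])
  have : (univ.filter (fun B => m B ∈ F)).card = (F.filter (fun A => A ⊆ Y)).card := by
    rw [← card_image_of_injective _ hinj]
    congr 1
    ext A
    simp only [mem_image, mem_filter, mem_univ, true_and]
    constructor
    · rintro ⟨B, hB, rfl⟩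
      refine ⟨hB, ?_⟩
      intro x hx
      simp only [m, mem_image] at hx
      obtain ⟨y, _, rfl⟩ := hx
      exact y.2
    · rintro ⟨hA, hAY⟩
      have : m (A.subtype (fun x => x ∈ Y)) = A := by
        ext x
        simp only [m, mem_image, mem_subtype]
        constructor
        · rintro ⟨y, hy, rfl⟩; exact hy
        · intro hx; exact ⟨⟨x, hAY hx⟩, hx, rfl⟩
      exact ⟨_, by rw [this]; exact hA, this⟩
  rw [this] at hb
  exact hb

lemma card_super (k n : ℕ) (A : Finset (Fin n)) (hA : A.card = 2*k) :
    ((powersetCard (4*k) univ).filter (fun Y : Finset (Fin n) => A ⊆ Y)).card = (n-2*k).choose (2*k) := by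
  have : (powersetCard (2*k) Aᶜ).card = (n-2*k).choose (2*k) := by
    rw [card_powersetCard, card_compl, hA, Fintype.card_fin]
  rw [← this]
  refine card_bij' (fun Y _ => Y \ A) (fun Z _ => Z ∪ A) ?_ ?_ ?_ ?_
  · intro Y hY
    simp only [mem_filter, mem_powersetCard, subset_univ, true_and] at hY
    rw [mem_powersetCard, card_sdiff_of_subset hY.2]
    refine ⟨?_, by omega⟩
    intro x hx; simp at hx ⊢; exact hx.2
  · intro Z hZ
    rw [mem_powersetCard] at hZ
    simp only [mem_filter, mem_powersetCard, subset_univ, true_and]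
    refine ⟨?_, subset_union_right⟩
    rw [card_union_of_disjoint]
    · omega
    · rw [disjoint_left]; intro x hx; simpa using hZ.1 hx
  · intro Y hY
    simp only [mem_filter] at hY
    exact sdiff_union_of_subset hY.2
  · intro Z hZ
    rw [mem_powersetCard] at hZ
    ext x
    have := @hZ.1 x
    simp at this ⊢
    tauto

end FrT

/-- **Frankl's triangle problem, uniform version, large `n`.** Let `k ≥ 1` and `n ≥ 4k`.
If `F` is a family of `2k`-element subsets of an `n`-element ground set containing no three
pairwise distinct members `A, B, C` with empty triple symmetric difference
`A ∆ B ∆ C = ∅`, then `(4k-1)·|F| ≤ 2k·C(n, 2k)`. -/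
theorem frankl_triangle_uniform_large_n (k n : ℕ) (hk : 1 ≤ k) (hn : 4 * k ≤ n)
    (F : Finset (Finset (Fin n)))
    (hcard : ∀ A ∈ F, A.card = 2 * k)
    (hfree : ∀ A ∈ F, ∀ B ∈ F, ∀ C ∈ F, A ≠ B → A ≠ C → B ≠ C →
      symmDiff (symmDiff A B) C ≠ ∅) :
    (4 * k - 1) * F.card ≤ 2 * k * n.choose (2 * k) := by
  have hcnt : ∑ Y ∈ Finset.powersetCard (4*k) (Finset.univ : Finset (Fin n)),
      (F.filter (fun A => A ⊆ Y)).card = F.card * (n-2*k).choose (2*k) := by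
    simp_rw [Finset.card_filter]
    rw [Finset.sum_comm]
    simp_rw [← Finset.card_filter]
    rw [Finset.sum_congr rfl (fun A hA => FrT.card_super k n A (hcard A hA)), Finset.sum_const,
      smul_eq_mul]
  have hle : ∑ Y ∈ Finset.powersetCard (4*k) (Finset.univ : Finset (Fin n)),
      (4 * (k:ℝ) - 1) * ((F.filter (fun A => A ⊆ Y)).card : ℝ) ≤
      ∑ Y ∈ Finset.powersetCard (4*k) (Finset.univ : Finset (Fin n)),
        2 * k * ((4*k).choose (2 * k) : ℝ) :=
    Finset.sum_le_sum (fun Y hY => FrT.local_bound k n hk F hcard hfree Y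
      (Finset.mem_powersetCard.1 hY).2)
  rw [← Finset.mul_sum, Finset.sum_const, Finset.card_powersetCard, Finset.card_univ,
    Fintype.card_fin, nsmul_eq_mul] at hle
  have hcnt' : ∑ Y ∈ Finset.powersetCard (4*k) (Finset.univ : Finset (Fin n)),
      ((F.filter (fun A => A ⊆ Y)).card : ℝ) = F.card * ((n-2*k).choose (2*k) : ℝ) := by
    exact_mod_cast hcnt
  rw [hcnt'] at hle
  have hch : (n.choose (4*k) : ℝ) * ((4*k).choose (2*k) : ℝ) =
      (n.choose (2*k) : ℝ) * ((n-2*k).choose (2*k) : ℝ) := by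
    have := Nat.choose_mul (n := n) (k := 4*k) (s := 2*k) (by omega)
    have e : 4*k - 2*k = 2*k := by omega
    rw [e] at this
    exact_mod_cast this
  have hpos : (0:ℝ) < ((n-2*k).choose (2*k) : ℝ) := by
    exact_mod_cast Nat.choose_pos (by omega)
  have hfin : (4 * (k:ℝ) - 1) * F.card ≤ 2 * k * (n.choose (2*k) : ℝ) := by
    apply le_of_mul_le_mul_right _ hpos
    have : (n.choose (4*k) : ℝ) * (2 * k * ((4*k).choose (2 * k) : ℝ)) =
        2 * k * (n.choose (2*k) : ℝ) * ((n-2*k).choose (2*k) : ℝ) := by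
      linear_combination (2 * (k:ℝ)) * hch
    linarith
  have hcast : ((4*k - 1 : ℕ) : ℝ) = 4 * (k:ℝ) - 1 := by
    rw [Nat.cast_sub (by omega)]; push_cast; ring
  rw [← hcast] at hfin
  exact_mod_cast hfin
end

section
/- Let n ≥ 1 and let p be a real number with 0 ≤ p ≤ 2/3. Let F be a family of subsets of {1,…,n} such that ∅ ∉ F and F contains no three pairwise distinct members A, B, C with empty triple symmetric difference A Δ B Δ C = ∅. Then μ_p(F) = Σ_{A∈F} p^{|A|}(1-p)^{n-|A|} ≤ max(p, 1/2). -/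
namespace FranklTri

open Finset

/-- Weight of a pair: both sets are `p`-biased, coordinates `11, 10, 01` each have weight `p/2`. -/
noncomputable def W {α : Type*} [DecidableEq α] (p : ℝ) (S A B : Finset α) : ℝ :=
  ∏ i ∈ S, if i ∈ A ∨ i ∈ B then p / 2 else 1 - 3 * p / 2

/-- The `p`-biased weight. -/
noncomputable def M {α : Type*} [DecidableEq α] (p : ℝ) (S A : Finset α) : ℝ :=
  ∏ i ∈ S, if i ∈ A then p else 1 - p

/-- Quadratic form of the coupling. -/
noncomputable def Q {α : Type*} [DecidableEq α] (p : ℝ) (S : Finset α) (f : Finset α → ℝ) : ℝ :=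
  ∑ A ∈ S.powerset, ∑ B ∈ S.powerset, W p S A B * (f A * f B)

/-- Expectation. -/
noncomputable def E {α : Type*} [DecidableEq α] (p : ℝ) (S : Finset α) (f : Finset α → ℝ) : ℝ :=
  ∑ A ∈ S.powerset, M p S A * f A

section
variable {α : Type*} [DecidableEq α] (p : ℝ)

lemma M_insert {a : α} {S A : Finset α} (ha : a ∉ S) (hA : A ⊆ S) :
    M p (insert a S) A = (1 - p) * M p S A ∧
    M p (insert a S) (insert a A) = p * M p S A := by
  have haA : a ∉ A := fun h => ha (hA h)
  unfold M
  rw [prod_insert ha, prod_insert ha]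
  refine ⟨by simp [haA], ?_⟩
  congr 1
  · simp
  · refine prod_congr rfl fun i hi => ?_
    have : i ≠ a := fun h => ha (h ▸ hi)
    simp [this]

lemma W_insert {a : α} {S A B : Finset α} (ha : a ∉ S) (hA : A ⊆ S) (hB : B ⊆ S) :
    W p (insert a S) A B = (1 - 3 * p / 2) * W p S A B ∧
    W p (insert a S) (insert a A) B = p / 2 * W p S A B ∧
    W p (insert a S) A (insert a B) = p / 2 * W p S A B ∧
    W p (insert a S) (insert a A) (insert a B) = p / 2 * W p S A B := by
  have haA : a ∉ A := fun h => ha (hA h)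
  have haB : a ∉ B := fun h => ha (hB h)
  unfold W
  simp only [prod_insert ha]
  refine ⟨by simp [haA, haB], ?_, ?_, ?_⟩ <;>
  · congr 1
    · simp
    · refine prod_congr rfl fun i hi => ?_
      have : i ≠ a := fun h => ha (h ▸ hi)
      simp [this]

lemma E_insert {a : α} {S : Finset α} (ha : a ∉ S) (f : Finset α → ℝ) :
    E p (insert a S) f = E p S (fun A => (1 - p) * f A + p * f (insert a A)) := by
  unfold E
  rw [sum_powerset_insert ha, ← sum_add_distrib]
  refine sum_congr rfl fun A hA => ?_
  obtain ⟨h1, h2⟩ := M_insert p ha (mem_powerset.1 hA)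
  rw [h1, h2]; ring

lemma pair_insert {a : α} {S : Finset α} (ha : a ∉ S) (f : Finset α → Finset α → ℝ) :
    ∑ A ∈ (insert a S).powerset, ∑ B ∈ (insert a S).powerset, W p (insert a S) A B * f A B =
    ∑ A ∈ S.powerset, ∑ B ∈ S.powerset, W p S A B *
      ((1 - 3 * p / 2) * f A B + p / 2 * (f (insert a A) B + f A (insert a B)
        + f (insert a A) (insert a B))) := by
  rw [sum_powerset_insert ha, ← sum_add_distrib]
  refine sum_congr rfl fun A hA => ?_
  rw [sum_powerset_insert ha, sum_powerset_insert ha, ← sum_add_distrib, ← sum_add_distrib,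
    ← sum_add_distrib]
  refine sum_congr rfl fun B hB => ?_
  obtain ⟨h1, h2, h3, h4⟩ := W_insert p ha (mem_powerset.1 hA) (mem_powerset.1 hB)
  rw [h1, h2, h3, h4]; ring

lemma marginal (S : Finset α) : ∀ f : Finset α → ℝ,
    ∑ A ∈ S.powerset, ∑ B ∈ S.powerset, W p S A B * f A = E p S f := by
  induction S using Finset.induction_on with
  | empty => intro f; simp [E, W, M]
  | insert a S ha ih =>
    intro f
    rw [E_insert p ha, pair_insert p ha (fun A _ => f A), ← ih]
    refine sum_congr rfl fun A _ => sum_congr rfl fun B _ => ?_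
    ring

lemma Q_insert {a : α} {S : Finset α} (ha : a ∉ S) (f : Finset α → ℝ) :
    Q p (insert a S) f = Q p S (fun A => (1 - p) * f A + p * f (insert a A)) +
      p * (1 - 2 * p) / 2 * Q p S (fun A => f (insert a A) - f A) := by
  unfold Q
  rw [pair_insert p ha (fun A B => f A * f B), mul_sum, ← sum_add_distrib]
  refine sum_congr rfl fun A _ => ?_
  rw [mul_sum, ← sum_add_distrib]
  refine sum_congr rfl fun B _ => ?_
  ring

lemma E2_insert {a : α} {S : Finset α} (ha : a ∉ S) (f : Finset α → ℝ) :
    E p (insert a S) (fun A => f A ^ 2) =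
      E p S (fun A => ((1 - p) * f A + p * f (insert a A)) ^ 2) +
      p * (1 - p) * E p S (fun A => (f (insert a A) - f A) ^ 2) := by
  rw [E_insert p ha]
  unfold E
  rw [mul_sum, ← sum_add_distrib]
  refine sum_congr rfl fun A _ => ?_
  ring

lemma Q_low (hp0 : 0 ≤ p) (hp : p ≤ 1 / 2) (S : Finset α) : ∀ f : Finset α → ℝ,
    E p S f ^ 2 ≤ Q p S f := by
  induction S using Finset.induction_on with
  | empty => intro f; simp [E, W, M, Q, sq]
  | insert a S ha ih =>
    intro f
    rw [E_insert p ha, Q_insert p ha]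
    have h1 := ih (fun A => (1 - p) * f A + p * f (insert a A))
    have h2 := (sq_nonneg _).trans (ih (fun A => f (insert a A) - f A))
    have h3 : 0 ≤ p * (1 - 2 * p) / 2 := by
      have : 0 ≤ 1 - 2 * p := by linarith
      positivity
    have := mul_nonneg h3 h2
    linarith

lemma Q_abs (hp0 : 0 ≤ p) (hp : p ≤ 2 / 3) (S : Finset α) : ∀ f : Finset α → ℝ,
    |Q p S f| ≤ E p S (fun A => f A ^ 2) := by
  induction S using Finset.induction_on with
  | empty => intro f; simp [E, W, M, Q, sq]
  | insert a S ha ih =>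
    intro f
    rw [E2_insert p ha, Q_insert p ha]
    refine (abs_add_le _ _).trans (add_le_add (ih _) ?_)
    rw [abs_mul]
    refine mul_le_mul ?_ (ih _) (abs_nonneg _) ?_
    · rw [abs_le]; constructor <;> nlinarith
    · nlinarith

lemma Q_high (hp0 : 1 / 2 ≤ p) (hp : p ≤ 2 / 3) (S : Finset α) : ∀ f : Finset α → ℝ,
    (1 - 2 * p) * E p S (fun A => f A ^ 2) + E p S f ^ 2 ≤ 2 * (1 - p) * Q p S f := by
  induction S using Finset.induction_on with
  | empty => intro f; simp [E, W, M, Q, sq]; apply le_of_eq; ring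
  | insert a S ha ih =>
    intro f
    rw [E2_insert p ha, E_insert p ha, Q_insert p ha]
    have h1 := ih (fun A => (1 - p) * f A + p * f (insert a A))
    have h2 := (abs_le.1 (Q_abs p (by linarith) hp S (fun A => f (insert a A) - f A))).2
    have h3 : 0 ≤ (1 - p) * (p * (2 * p - 1)) :=
      mul_nonneg (by linarith) (mul_nonneg (by linarith) (by linarith))
    have := mul_le_mul_of_nonneg_left h2 h3
    linarith

lemma Q_symm (S : Finset α) (f : Finset α → ℝ) :
    ∑ A ∈ S.powerset, ∑ B ∈ S.powerset, W p S A B * (f A * f (symmDiff A B)) = Q p S f := by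
  unfold Q
  refine sum_congr rfl fun A hA => ?_
  rw [mem_powerset] at hA
  have hs : ∀ B ∈ S.powerset, symmDiff A B ∈ S.powerset := by
    intro B hB
    rw [mem_powerset] at hB ⊢
    intro i hi
    rw [mem_symmDiff] at hi
    rcases hi with h | h
    · exact hA h.1
    · exact hB h.1
  refine sum_nbij' (fun B => symmDiff A B) (fun B => symmDiff A B) hs hs ?_ ?_ ?_
  · intro B _; simp
  · intro B _; simp
  · intro B _
    congr 1
    unfold W
    refine prod_congr rfl fun i _ => ?_
    have : (i ∈ A ∨ i ∈ B) ↔ (i ∈ A ∨ i ∈ symmDiff A B) := by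
      rw [mem_symmDiff]; tauto
    simp only [this]

lemma W_nonneg (hp0 : 0 ≤ p) (hp : p ≤ 2 / 3) (S A B : Finset α) : 0 ≤ W p S A B := by
  unfold W
  refine prod_nonneg fun i _ => ?_
  split_ifs <;> linarith

end

end FranklTri


/-- **Frankl's triangle problem, `p`-biased version.** Let `0 ≤ p ≤ 2/3` and let `F` be a
family of subsets of an `n`-element ground set with `∅ ∉ F` and containing no three pairwise
distinct members `A, B, C` with empty triple symmetric difference `A ∆ B ∆ C = ∅`. Then the
`p`-biased measure `μ_p(F) = ∑_{A ∈ F} p^{|A|}(1-p)^{n-|A|}` is at most `max(p, 1/2)`. -/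
theorem frankl_triangle_biased (n : ℕ) (hn : 1 ≤ n) (p : ℝ)
    (hp0 : 0 ≤ p) (hp1 : p ≤ 2 / 3)
    (F : Finset (Finset (Fin n)))
    (hempty : ∅ ∉ F)
    (hfree : ∀ A ∈ F, ∀ B ∈ F, ∀ C ∈ F, A ≠ B → A ≠ C → B ≠ C →
      symmDiff (symmDiff A B) C ≠ ∅) :
    ∑ A ∈ F, p ^ A.card * (1 - p) ^ (n - A.card) ≤ max p (1 / 2) := by

  classical
  set f : Finset (Fin n) → ℝ := fun A => if A ∈ F then 1 else 0 with hf
  have hM : ∑ A ∈ F, p ^ A.card * (1 - p) ^ (n - A.card) = FranklTri.E p Finset.univ f := by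
    unfold FranklTri.E
    simp only [hf, mul_ite, mul_one, mul_zero, Finset.powerset_univ]
    rw [Finset.sum_ite_mem, Finset.univ_inter]
    refine Finset.sum_congr rfl fun A _ => ?_
    unfold FranklTri.M
    rw [Finset.prod_ite, Finset.prod_const, Finset.prod_const, Finset.filter_not]
    simp [← Finset.compl_eq_univ_sdiff, Finset.card_compl]
  have hsq : (fun A => f A ^ 2) = f := by
    funext A; simp only [hf]; split_ifs <;> simp
  have hpt : ∀ A B, f A * f B + f A * f (symmDiff A B) ≤ f A := by
    intro A B
    by_cases hA : A ∈ F
    · by_cases hB : B ∈ F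
      · by_cases hC : symmDiff A B ∈ F
        · exfalso
          have hA0 : A ≠ ∅ := fun h => hempty (h ▸ hA)
          have hB0 : B ≠ ∅ := fun h => hempty (h ▸ hB)
          refine hfree A hA B hB _ hC ?_ ?_ ?_ ?_
          · rintro rfl
            apply hempty
            simpa using hC
          · intro h
            exact hB0 (by simpa using h.symm)
          · intro h
            exact hA0 (by simpa using h.symm)
          · simp
        · simp [hf, hA, hB, hC]
      · by_cases hC : symmDiff A B ∈ F <;> simp [hf, hA, hB, hC]
    · simp [hf, hA]
  have h2 : 2 * FranklTri.Q p Finset.univ f ≤ FranklTri.E p Finset.univ f := by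
    rw [← FranklTri.marginal p Finset.univ f, two_mul]
    nth_rewrite 2 [← FranklTri.Q_symm]
    unfold FranklTri.Q
    rw [← Finset.sum_add_distrib]
    refine Finset.sum_le_sum fun A _ => ?_
    rw [← Finset.sum_add_distrib]
    refine Finset.sum_le_sum fun B _ => ?_
    rw [← mul_add]
    exact mul_le_mul_of_nonneg_left (hpt A B) (FranklTri.W_nonneg p hp0 hp1 _ _ _)
  rw [hM]
  rcases le_total p (1 / 2) with h | h
  · refine le_trans ?_ (le_max_right _ _)
    have := FranklTri.Q_low p hp0 h Finset.univ f
    nlinarith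
  · refine le_trans ?_ (le_max_left _ _)
    have := FranklTri.Q_high p h hp1 Finset.univ f
    rw [hsq] at this
    have h4 := mul_le_mul_of_nonneg_left h2 (by linarith : 0 ≤ 1 - p)
    nlinarith
end
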